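/- Let H be a forest and let H' be the star-expansion of H. Then there exists a real number τ > 0 such that every graph G that is both H̄-free and H'-free satisfies max(α(G), ω(G)) ≥ |G|^τ; that is, {H̄, H'} has the Erdős–Hajnal property. -/

import Mathlib

open SimpleGraph

/-- The independence (stable set) number of a graph: the clique number of the complement. -/
noncomputable def alphaNum {V : Type*} (G : SimpleGraph V) : ℕ := Gᶜ.cliqueNum

/-- The clique number of a graph. -/
noncomputable def omegaNum {V : Type*} (G : SimpleGraph V) : ℕ := G.cliqueNum

/-- κ(G) = α(G)·ω(G). -/
noncomputable def kappaNum {V : Type*} (G : SimpleGraph V) : ℕ := alphaNum G * omegaNum G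

/-- The star-expansion of `H`: for each vertex `b` of `H`, add a new vertex `a_b` adjacent
to `b` only, and add one further vertex `v` adjacent to all of the `a_b` and nothing else. -/
def starExpansion {W : Type*} (H : SimpleGraph W) : SimpleGraph (W ⊕ W ⊕ Unit) :=
  SimpleGraph.fromRel (fun x y =>
    match x, y with
    | Sum.inl b, Sum.inl b' => H.Adj b b'
    | Sum.inl b, Sum.inr (Sum.inl a) => b = a
    | Sum.inr (Sum.inl _), Sum.inr (Sum.inr _) => True
    | _, _ => False)

/-! A set `P` of vertices is *critical* with exponent `ρ` if `κ(Q) / κ(P) ≥ (|Q| / |P|) ^ ρ` for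
all nonempty `Q ⊆ P`, where `κ = α * ω`. Minimising `κ(Q) / |Q| ^ ρ` gives a critical subset of any
nonempty set, on which this ratio is no larger, so it is enough that for some `ρ > 0` all critical
sets of the graphs under consideration are single vertices.

Excluding any graph gives, by Rödl's theorem, a sparse set in every set of vertices, up to
complementation. If `v` has maximum degree in a sparse critical set and `A` is a maximum stable set
of neighbours of `v`, then by criticality few vertices have no neighbour in `A`, so `A` covers a
set `T` of almost all vertices: a *star cover*. Let `D` bound the degrees from `A` to `T`, and
choose a star cover for which `|T| * (|T| / D) ^ η` is maximum. A subset `S` of `A`, chosen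
greedily, is such that every `a ∈ A` has at most `3 * D / 4` neighbours among the vertices of `T`
not dominated by `S`. If `S` dominates only a small part of `T`, then the rest of `T` is a better
star cover, so `S` dominates a large part, much of it uniquely. This yields a *comb*: `v`, the
spine `S`, and teeth each with a unique neighbour in `S`.

The construction is repeated inside the teeth, in the graph or in its complement. Each tooth is
labelled by its neighbour on the spine, and since the label classes are small, the spine of each
new comb can be kept free of the labels of its teeth. This can stop only at a star cover or a
sparse set so large and so sparse that it does not fit into `P` once the constants are chosen well.
Otherwise more than `|H|` combs are nested in the same graph, and removing the leaves of the forest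
one at a time, a copy of it with pairwise distinct labels is found in the teeth of the first comb,
which completes it to the star-expansion. -/

universe u

section CliqueNumbers

variable {V : Type u} (G : SimpleGraph V) {P Q : Finset V}

/-- The largest size of a clique of `G` contained in the finite set `P`. -/
noncomputable def cliqueNumOn (P : Finset V) : ℕ := (G.induce (P : Set V)).cliqueNum

/-- The product `κ(G[P]) = α(G[P]) * ω(G[P])`, written with the clique number of the complement
so that the symmetry between `G` and its complement is visible. -/
noncomputable def kappaOn (P : Finset V) : ℕ := cliqueNumOn G P * cliqueNumOn Gᶜ P

variable {G}

lemma card_le_cliqueNumOn (hQP : Q ⊆ P) (hQ : G.IsClique (Q : Set V)) :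
    Q.card ≤ cliqueNumOn G P := by
  classical
  have himage : (Q.subtype (· ∈ (P : Set V))).map (.subtype _) = Q := by
    rw [Finset.subtype_map]
    exact Finset.filter_true_of_mem hQP
  have hclique : (G.induce (P : Set V)).IsClique (Q.subtype (· ∈ (P : Set V)) : Set _) := by
    rw [isClique_induce_iff]
    refine hQ.subset ?_
    rintro _ ⟨x, hx, rfl⟩
    simpa using hx
  have hcard := hclique.card_le_cliqueNum
  rwa [← Finset.card_map, himage] at hcard

variable (G)

lemma exists_isClique_card_eq_cliqueNumOn (P : Finset V) :
    ∃ Q ⊆ P, G.IsClique (Q : Set V) ∧ Q.card = cliqueNumOn G P := by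
  obtain ⟨S, hS⟩ := (G.induce (P : Set V)).exists_isNClique_cliqueNum
  rw [isNClique_induce_iff] at hS
  refine ⟨_, fun x hx => ?_, hS.isClique, hS.card_eq⟩
  obtain ⟨y, -, rfl⟩ := Finset.mem_map.1 hx
  exact y.2

lemma cliqueNumOn_mono (h : Q ⊆ P) : cliqueNumOn G Q ≤ cliqueNumOn G P := by
  obtain ⟨R, hR, hclique, hcard⟩ := exists_isClique_card_eq_cliqueNumOn G Q
  exact hcard ▸ card_le_cliqueNumOn (hR.trans h) hclique

lemma cliqueNumOn_le_card (P : Finset V) : cliqueNumOn G P ≤ P.card := by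
  obtain ⟨R, hR, -, hcard⟩ := exists_isClique_card_eq_cliqueNumOn G P
  exact hcard ▸ Finset.card_le_card hR

lemma one_le_cliqueNumOn (h : P.Nonempty) : 1 ≤ cliqueNumOn G P := by
  obtain ⟨x, hx⟩ := h
  simpa using card_le_cliqueNumOn (G := G) (Q := {x}) (by simpa) (by simp)

lemma kappaOn_compl (P : Finset V) : kappaOn Gᶜ P = kappaOn G P := by
  rw [kappaOn, kappaOn, compl_compl, mul_comm]

lemma kappaOn_mono (h : Q ⊆ P) : kappaOn G Q ≤ kappaOn G P :=
  Nat.mul_le_mul (cliqueNumOn_mono G h) (cliqueNumOn_mono Gᶜ h)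

lemma one_le_kappaOn (h : P.Nonempty) : 1 ≤ kappaOn G P :=
  Nat.mul_pos (one_le_cliqueNumOn G h) (one_le_cliqueNumOn Gᶜ h)

lemma kappaOn_singleton (x : V) : kappaOn G {x} = 1 :=
  le_antisymm (Nat.mul_le_mul (cliqueNumOn_le_card G {x}) (cliqueNumOn_le_card Gᶜ {x}))
    (one_le_kappaOn G (Finset.singleton_nonempty x))

lemma two_le_kappaOn (h : 2 ≤ P.card) : 2 ≤ kappaOn G P := by
  classical
  obtain ⟨x, hx, y, hy, hxy⟩ := Finset.one_lt_card.1 h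
  have hsub : ({x, y} : Finset V) ⊆ P := Finset.insert_subset hx (Finset.singleton_subset_iff.2 hy)
  have hP : P.Nonempty := ⟨x, hx⟩
  have hpair {F : SimpleGraph V} (hF : F.Adj x y) : 2 ≤ cliqueNumOn F P := by
    rw [← Finset.card_pair hxy]
    exact card_le_cliqueNumOn hsub (by simp [hxy, hF])
  by_cases hadj : G.Adj x y
  · exact Nat.mul_le_mul (hpair hadj) (one_le_cliqueNumOn Gᶜ hP)
  · exact Nat.mul_le_mul (one_le_cliqueNumOn G hP) (hpair ((compl_adj _ _ _).2 ⟨hxy, hadj⟩))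

lemma kappaOn_add_kappaOn_le {A B Z : Finset V} (hA : A ⊆ P) (hB : B ⊆ P)
    (hZA : Z ⊆ A) (hZ : G.IsIndepSet (Z : Set V)) (hcard : Z.card = cliqueNumOn Gᶜ A)
    (hZB : ∀ z ∈ Z, ∀ b ∈ B, Gᶜ.Adj z b) :
    kappaOn G A + kappaOn G B ≤ kappaOn G P := by
  classical
  obtain ⟨Y, hYB, hY, hYcard⟩ := exists_isClique_card_eq_cliqueNumOn Gᶜ B
  have hdisj : Disjoint Z Y :=
    Finset.disjoint_left.2 fun z hz hzY => (hZB z hz z (hYB hzY)).ne rfl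
  have hunion : Gᶜ.IsClique ((Z ∪ Y : Finset V) : Set V) := by
    rw [Finset.coe_union, SimpleGraph.IsClique, Set.pairwise_union]
    exact ⟨(isClique_compl G).2 hZ, hY, fun z hz y hy _ =>
      ⟨hZB z hz y (hYB hy), (hZB z hz y (hYB hy)).symm⟩⟩
  have hle := card_le_cliqueNumOn (Finset.union_subset (hZA.trans hA) (hYB.trans hB)) hunion
  rw [Finset.card_union_of_disjoint hdisj, hcard, hYcard] at hle
  calc kappaOn G A + kappaOn G B
      ≤ cliqueNumOn G P * cliqueNumOn Gᶜ A + cliqueNumOn G P * cliqueNumOn Gᶜ B :=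
        add_le_add (Nat.mul_le_mul_right _ (cliqueNumOn_mono G hA))
          (Nat.mul_le_mul_right _ (cliqueNumOn_mono G hB))
    _ = cliqueNumOn G P * (cliqueNumOn Gᶜ A + cliqueNumOn Gᶜ B) := (mul_add _ _ _).symm
    _ ≤ kappaOn G P := Nat.mul_le_mul_left _ hle

lemma kappaOn_univ_le [Fintype V] :
    kappaOn G Finset.univ ≤ max (alphaNum G) (omegaNum G) ^ 2 := by
  rw [sq]
  exact Nat.mul_le_mul ((cliqueNum_induce_le _).trans (le_max_right _ _))
    ((cliqueNum_induce_le _).trans (le_max_left _ _))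

end CliqueNumbers

section Criticality

variable {V : Type u} {G : SimpleGraph V} {P Q : Finset V} {ρ ρ' s s' : ℝ}

/-- The logarithm of the size of a finite set (`0` for the empty set). -/
noncomputable def logCard (P : Finset V) : ℝ := Real.log P.card

/-- The logarithm of `kappaOn`. -/
noncomputable def logKappa (G : SimpleGraph V) (P : Finset V) : ℝ := Real.log (kappaOn G P)

lemma logCard_nonneg (P : Finset V) : 0 ≤ logCard P := Real.log_natCast_nonneg _

lemma exp_logCard (h : P.Nonempty) : Real.exp (logCard P) = P.card :=
  Real.exp_log (by exact_mod_cast h.card_pos)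

lemma logCard_mono (h : Q ⊆ P) : logCard Q ≤ logCard P := by
  obtain rfl | hQ := Q.eq_empty_or_nonempty
  · simpa [logCard] using logCard_nonneg P
  · exact Real.log_le_log (by exact_mod_cast hQ.card_pos) (by exact_mod_cast Finset.card_le_card h)

lemma logKappa_nonneg (G : SimpleGraph V) (P : Finset V) : 0 ≤ logKappa G P :=
  Real.log_natCast_nonneg _

lemma logKappa_mono (hQ : Q.Nonempty) (h : Q ⊆ P) : logKappa G Q ≤ logKappa G P :=
  Real.log_le_log (by exact_mod_cast one_le_kappaOn G hQ) (by exact_mod_cast kappaOn_mono G h)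

lemma logKappa_compl (G : SimpleGraph V) (P : Finset V) : logKappa Gᶜ P = logKappa G P := by
  rw [logKappa, kappaOn_compl, logKappa]

/-- `P` is critical with exponent `ρ` and slack `s`: every nonempty `Q ⊆ P` satisfies
`κ(G[Q]) ≥ exp (-s) * (|Q| / |P|) ^ ρ * κ(G[P])`, stated in logarithms. -/
def Critical (G : SimpleGraph V) (ρ s : ℝ) (P : Finset V) : Prop :=
  ∀ Q ⊆ P, Q.Nonempty → logKappa G P + ρ * (logCard Q - logCard P) ≤ s + logKappa G Q

namespace Critical

lemma compl (h : Critical G ρ s P) : Critical Gᶜ ρ s P := fun Q hQ hne => by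
  simpa only [logKappa_compl] using h Q hQ hne

lemma subset (h : Critical G ρ s P) (hQ : Q ⊆ P) (hne : Q.Nonempty) :
    Critical G ρ (s + ρ * (logCard P - logCard Q)) Q := fun R hR hRne => by
  have hcritical := h R (hR.trans hQ) hRne
  have hmono := logKappa_mono (G := G) hne hQ
  linarith

lemma weaken (h : Critical G ρ s P) (hρ : ρ ≤ ρ') (hs : s ≤ s') : Critical G ρ' s' P :=
  fun R hR hRne => by
    have hcritical := h R hR hRne
    have hmono := logCard_mono hR
    nlinarith

end Critical

lemma exists_critical_subset (G : SimpleGraph V) (ρ : ℝ) (hP : P.Nonempty) :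
    ∃ Q ⊆ P, Q.Nonempty ∧ Critical G ρ 0 Q ∧
      logKappa G Q + ρ * (logCard P - logCard Q) ≤ logKappa G P := by
  classical
  obtain ⟨Q, hQ, hmin⟩ := Finset.exists_min_image (P.powerset.filter (·.Nonempty))
    (fun Q => logKappa G Q - ρ * logCard Q) ⟨P, by simpa⟩
  simp only [Finset.mem_filter, Finset.mem_powerset] at hQ hmin
  refine ⟨Q, hQ.1, hQ.2, fun R hR hne => ?_, ?_⟩
  · linarith [hmin R ⟨hR.trans hQ.1, hne⟩]
  · linarith [hmin P ⟨subset_rfl, hP⟩]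

namespace Critical

lemma exists_critical_subset (h : Critical G ρ s P) (hP : P.Nonempty) (ρ' : ℝ) :
    ∃ Q ⊆ P, Q.Nonempty ∧ Critical G ρ' 0 Q ∧ (ρ' - ρ) * (logCard P - logCard Q) ≤ s := by
  obtain ⟨Q, hQ, hne, hcritical, hle⟩ := _root_.exists_critical_subset G ρ' hP
  exact ⟨Q, hQ, hne, hcritical, by linarith [h Q hQ hne]⟩

lemma rpow_mul_kappaOn_le (h : Critical G ρ 0 P) (hQ : Q ⊆ P) (hne : Q.Nonempty) :
    ((Q.card : ℝ) / P.card) ^ ρ * kappaOn G P ≤ kappaOn G Q := by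
  have hlog := h Q hQ hne
  have hQpos : (0 : ℝ) < Q.card := by exact_mod_cast hne.card_pos
  have hPpos : (0 : ℝ) < P.card := by exact_mod_cast (hne.mono hQ).card_pos
  have hκQ : (0 : ℝ) < kappaOn G Q := by exact_mod_cast one_le_kappaOn G hne
  have hκP : (0 : ℝ) < kappaOn G P := by exact_mod_cast one_le_kappaOn G (hne.mono hQ)
  simp only [logKappa, logCard] at hlog
  rw [← Real.log_le_log_iff (by positivity) hκQ, Real.log_mul (by positivity) hκP.ne',
    Real.log_rpow (by positivity), Real.log_div hQpos.ne' hPpos.ne']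
  linarith

lemma exists_adj (h : Critical G ρ 0 P) (hρ : ρ < 1) (hP : 2 ≤ P.card) :
    ∃ x ∈ P, ∃ y ∈ P, G.Adj x y := by
  by_contra! hstable
  obtain ⟨x, hx⟩ : P.Nonempty := Finset.card_pos.1 (by omega)
  have hclique : Gᶜ.IsClique (P : Set V) := fun x hx y hy hxy =>
    (compl_adj _ _ _).2 ⟨hxy, hstable x hx y hy⟩
  have hcard : P.card ≤ kappaOn G P := by
    rw [← one_mul P.card]
    exact Nat.mul_le_mul (one_le_cliqueNumOn G ⟨x, hx⟩) (card_le_cliqueNumOn subset_rfl hclique)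
  have hlog : logCard P ≤ logKappa G P :=
    Real.log_le_log (by exact_mod_cast (by omega : 0 < P.card)) (by exact_mod_cast hcard)
  have hsingleton := h {x} (by simpa) (by simp)
  simp only [logCard, logKappa, kappaOn_singleton, Finset.card_singleton, Nat.cast_one,
    Real.log_one] at hsingleton hlog
  have hpos : 0 < Real.log (P.card : ℝ) := Real.log_pos (by exact_mod_cast hP)
  nlinarith

end Critical

/-- `G` itself or its complement. -/
def side (G : SimpleGraph V) : Bool → SimpleGraph V
  | true => G
  | false => Gᶜ

lemma Critical.side (h : Critical G ρ s P) : ∀ t, Critical (side G t) ρ s P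
  | true => h
  | false => h.compl

end Criticality

section NeighborSets

variable {V : Type u} {G : SimpleGraph V} {S T : Finset V} {v u : V}

/-- The neighbours of `v` in the finite set `T`. -/
noncomputable def nbrIn (G : SimpleGraph V) (v : V) (T : Finset V) : Finset V :=
  open Classical in T.filter (G.Adj v)

@[simp] lemma mem_nbrIn : u ∈ nbrIn G v T ↔ u ∈ T ∧ G.Adj v u := by simp [nbrIn]

lemma nbrIn_subset (G : SimpleGraph V) (v : V) (T : Finset V) : nbrIn G v T ⊆ T :=
  fun _ hu => (mem_nbrIn.1 hu).1

lemma nbrIn_mono (G : SimpleGraph V) (v : V) (h : S ⊆ T) : nbrIn G v S ⊆ nbrIn G v T :=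
  fun _ hu => mem_nbrIn.2 ⟨h (mem_nbrIn.1 hu).1, (mem_nbrIn.1 hu).2⟩

lemma card_nbrIn_mono (G : SimpleGraph V) (v : V) (h : S ⊆ T) :
    (nbrIn G v S).card ≤ (nbrIn G v T).card :=
  Finset.card_le_card (nbrIn_mono G v h)

lemma card_nbrIn_union_le [DecidableEq V] (G : SimpleGraph V) (v : V) (S T : Finset V) :
    (nbrIn G v (S ∪ T)).card ≤ (nbrIn G v S).card + (nbrIn G v T).card := by
  simpa only [nbrIn, Finset.filter_union] using Finset.card_union_le _ _

lemma sum_card_nbrIn_comm (G : SimpleGraph V) (S T : Finset V) :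
    ∑ x ∈ S, (nbrIn G x T).card = ∑ y ∈ T, (nbrIn G y S).card := by
  classical
  simpa only [nbrIn, Finset.bipartiteAbove, Finset.bipartiteBelow, G.adj_comm] using
    Finset.sum_card_bipartiteAbove_eq_sum_card_bipartiteBelow (s := S) (t := T) G.Adj

end NeighborSets

section TransversalCopies

variable {V : Type u} {G : SimpleGraph V}

/-- Every vertex of `A` has at most `ε * |T|` neighbours in `T`. -/
def IsSparseTo (G : SimpleGraph V) (ε : ℝ) (A T : Finset V) : Prop :=
  ∀ a ∈ A, ((nbrIn G a T).card : ℝ) ≤ ε * T.card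

/-- `G` has an induced copy of `X` whose vertex `i` lies in `C i`. -/
def HasTransversalCopy {W : Type*} (X : SimpleGraph W) (G : SimpleGraph V) (C : W → Finset V) :
    Prop :=
  ∃ φ : X ↪g G, ∀ i, φ i ∈ C i

lemma adj_iff_of_side {p : Prop} [Decidable p] {a b : V} (h : (side G (decide p)).Adj a b) :
    G.Adj a b ↔ p := by
  by_cases hp : p
  · simp only [hp, decide_true, side] at h
    exact iff_of_true h hp
  · simp only [hp, decide_false, side, compl_adj] at h
    exact iff_of_false h.2 hp

lemma HasTransversalCopy.cons {k : ℕ} {X : SimpleGraph (Fin (k + 1))} {C : Fin (k + 1) → Finset V}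
    {B : Fin k → Finset V} {v : V} (hv : v ∈ C 0)
    (hB : ∀ j : Fin k, B j ⊆
      nbrIn (side G (open Classical in decide (X.Adj 0 j.succ))) v (C j.succ))
    (h : HasTransversalCopy (X.comap Fin.succ) G B) : HasTransversalCopy X G C := by
  classical
  obtain ⟨φ, hφ⟩ := h
  have hmem (j : Fin k) := mem_nbrIn.1 (hB j (hφ j))
  have hinj : Function.Injective (Fin.cons v φ : Fin (k + 1) → V) := by
    rw [Fin.cons_injective_iff]
    exact ⟨fun ⟨j, hj⟩ => (hmem j).2.ne hj.symm, φ.injective⟩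
  refine ⟨⟨⟨Fin.cons v φ, hinj⟩, fun {i j} => ?_⟩, Fin.cases hv fun j => (hmem j).1⟩
  refine Fin.cases ?_ (fun i => ?_) i <;> refine Fin.cases ?_ (fun j => ?_) j
  · simp
  · simpa using adj_iff_of_side (hmem j).2
  · simpa [G.adj_comm, X.adj_comm] using adj_iff_of_side (hmem i).2
  · exact φ.map_adj_iff

lemma exists_subset_isSparseTo {ι : Type*} [Fintype ι] {F : ι → SimpleGraph V} {ε : ℝ}
    {S : Finset V} {T : ι → Finset V} (hS : S.Nonempty)
    (h : ∀ v ∈ S, ∃ j, ((nbrIn (F j) v (T j)).card : ℝ) ≤ ε * (T j).card) :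
    ∃ j, ∃ A ⊆ S, S.card ≤ Fintype.card ι * A.card ∧ IsSparseTo (F j) ε A (T j) := by
  classical
  have : Nonempty ι := let ⟨v, hv⟩ := hS; ⟨(h v hv).choose⟩
  choose! f hf using h
  obtain ⟨j, -, hj⟩ := Finset.exists_le_card_fiber_of_nsmul_le_card_of_maps_to
    (s := S) (t := Finset.univ) (f := f) (b := (S.card : ℝ) / Fintype.card ι) (by simp)
    Finset.univ_nonempty (by
      rw [Finset.card_univ, nsmul_eq_mul, mul_div_cancel₀ _ (by simp)])
  refine ⟨j, S.filter (f · = j), Finset.filter_subset _ _, ?_, fun a ha => ?_⟩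
  · rw [div_le_iff₀' (by exact_mod_cast Fintype.card_pos)] at hj
    exact_mod_cast hj
  · obtain ⟨haS, rfl⟩ := Finset.mem_filter.1 ha
    exact hf a haS

/-- A copy of `X` is embedded greedily; the first vertex without enough candidates left for the
remaining ones yields the sparse pair. -/
lemma exists_hasTransversalCopy_or_isSparseTo (k : ℕ) (X : SimpleGraph (Fin k)) {ε : ℝ}
    (hε : 0 < ε) :
    ∃ δ : ℝ, 0 < δ ∧ ∀ (V : Type u) (G : SimpleGraph V) (C : Fin k → Finset V) (c : ℕ), 0 < c →
      (∀ i, (C i).card = c) → HasTransversalCopy X G C ∨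
      ∃ (i j : Fin k) (t : Bool), ∃ A ⊆ C i, ∃ T ⊆ C j, δ * c ≤ T.card ∧ T.card ≤ k * A.card ∧
        IsSparseTo (side G t) ε A T := by
  classical
  induction k with
  | zero =>
    exact ⟨1, one_pos, fun V G C c _ _ => .inl
      ⟨⟨Function.Embedding.ofIsEmpty, fun {i} => i.elim0⟩, fun i => i.elim0⟩⟩
  | succ k ih =>
    obtain ⟨δ, hδ, h⟩ := ih (X.comap Fin.succ)
    refine ⟨min 1 (δ * ε), by positivity, fun V G C c hc hC => ?_⟩
    let kind (j : Fin k) : Bool := decide (X.Adj 0 j.succ)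
    by_cases hgood : ∃ v ∈ C 0, ∀ j : Fin k, ε * c ≤ (nbrIn (side G (kind j)) v (C j.succ)).card
    · obtain ⟨v, hv, hvj⟩ := hgood
      choose B hB hBcard using fun j => Finset.exists_subset_card_eq (Nat.ceil_le.2 (hvj j))
      refine (h V G B _ (Nat.ceil_pos.2 (by positivity)) hBcard).imp (.cons hv hB) ?_
      rintro ⟨i, j, t, A, hA, T, hT, hTcard, hTA, hsparse⟩
      have hBC (j) : B j ⊆ C j.succ := (hB j).trans (nbrIn_subset _ _ _)
      refine ⟨i.succ, j.succ, t, A, hA.trans (hBC i), T, hT.trans (hBC j), ?_,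
        hTA.trans (by gcongr; omega), hsparse⟩
      calc min 1 (δ * ε) * c ≤ δ * ε * c := by gcongr; exact min_le_right _ _
        _ = δ * (ε * c) := mul_assoc _ _ _
        _ ≤ δ * ⌈ε * (c : ℝ)⌉₊ := by gcongr; exact Nat.le_ceil _
        _ ≤ T.card := hTcard
    · push Not at hgood
      obtain ⟨j, A, hA, hcard, hsparse⟩ := exists_subset_isSparseTo (S := C 0)
        (F := fun j => side G (kind j)) (T := fun j => C j.succ) (ε := ε)
        (Finset.card_pos.1 (by rwa [hC])) fun v hv =>
          (hgood v hv).imp fun j hj => by rw [hC]; exact hj.le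
      rw [hC, Fintype.card_fin] at hcard
      refine .inr ⟨0, j.succ, kind j, A, hA, C j.succ, subset_rfl, ?_, ?_, hsparse⟩ <;> rw [hC]
      · exact mul_le_of_le_one_left (by positivity) (min_le_left _ _)
      · exact hcard.trans (by gcongr; omega)

end TransversalCopies

section Rodl

variable {V : Type u} {G : SimpleGraph V} {W : Type*}

lemma IsSparseTo.exists_disjoint {ε : ℝ} {k : ℕ} {A T : Finset V} (hε : 0 ≤ ε)
    (h : IsSparseTo G (ε / (k + 3)) A T) (hT : 2 ≤ T.card) (hTA : T.card ≤ k * A.card) :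
    ∃ A' ⊆ A, ∃ T' ⊆ T, Disjoint A' T' ∧ A'.card = T'.card ∧
      (T.card : ℝ) ≤ (k + 3) * T'.card ∧ IsSparseTo G ε A' T' := by
  classical
  obtain ⟨r, hrA, hrT, hTr⟩ : ∃ r ≤ A.card, 2 * r ≤ T.card ∧ T.card ≤ (k + 3) * r := by
    rcases le_total A.card (T.card / 2) with hle | hle
    · exact ⟨A.card, le_rfl, by omega, by nlinarith⟩
    · refine ⟨T.card / 2, hle, by omega, ?_⟩
      have : T.card ≤ 3 * (T.card / 2) := by omega
      nlinarith
  obtain ⟨A', hA', hA'card⟩ := Finset.exists_subset_card_eq hrA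
  obtain ⟨T', hT', hT'card⟩ := Finset.exists_subset_card_eq
    (show r ≤ (T \ A').card by have := Finset.le_card_sdiff A' T; omega)
  have hTr' : (T.card : ℝ) ≤ (k + 3) * T'.card := by exact_mod_cast hT'card ▸ hTr
  refine ⟨A', hA', T', hT'.trans Finset.sdiff_subset, Finset.disjoint_sdiff.mono_right hT',
    hA'card.trans hT'card.symm, hTr', fun a ha => ?_⟩
  calc ((nbrIn G a T').card : ℝ)
      ≤ (nbrIn G a T).card := by
        exact_mod_cast card_nbrIn_mono _ a (hT'.trans Finset.sdiff_subset)
    _ ≤ ε / (k + 3) * T.card := h a (hA' ha)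
    _ ≤ ε / (k + 3) * ((k + 3) * T'.card) := by gcongr
    _ = ε * T'.card := by field_simp

lemma exists_disjoint_isSparseTo [Finite W] (X : SimpleGraph W) {ε : ℝ} (hε : 0 < ε) :
    ∃ δ : ℝ, 0 < δ ∧ ∀ (V : Type u) (G : SimpleGraph V), ¬ Nonempty (X ↪g G) →
      ∀ P : Finset V, 1 ≤ δ * P.card → ∃ t, ∃ A ⊆ P, ∃ T ⊆ P, Disjoint A T ∧ A.card = T.card ∧
        δ * P.card ≤ T.card ∧ IsSparseTo (side G t) ε A T := by
  obtain ⟨k, ⟨e⟩⟩ := Finite.exists_equiv_fin W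
  obtain ⟨δ, hδ, h⟩ := exists_hasTransversalCopy_or_isSparseTo.{u} k (X.comap e.symm)
    (ε := ε / (k + 3)) (by positivity)
  refine ⟨δ / (k + 3), by positivity, fun V G hX P hP => ?_⟩
  rw [div_mul_eq_mul_div, one_le_div₀ (by positivity)] at hP
  have hPpos : (0 : ℝ) < P.card := pos_of_mul_pos_right (by linarith) hδ.le
  obtain ⟨φ, -⟩ | ⟨-, -, t, A, hA, T, hT, hδT, hTA, hsparse⟩ :=
    h V G (fun _ => P) P.card (by exact_mod_cast hPpos) fun _ => rfl
  · exact (hX ⟨φ.comp (Iso.comap e.symm X).symm.toEmbedding⟩).elim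
  have hTtwo : (2 : ℝ) ≤ T.card := by linarith
  obtain ⟨A', hA', T', hT', hdisj, hcard, hle, hsparse'⟩ :=
    hsparse.exists_disjoint hε.le (by exact_mod_cast hTtwo) hTA
  refine ⟨t, A', hA'.trans hA, T', hT'.trans hT, hdisj, hcard, ?_, hsparse'⟩
  rw [div_mul_eq_mul_div, div_le_iff₀' (by positivity)]
  exact hδT.trans hle

/-- `R` has `n * s` vertices and spans few edges, as a union of `n` sets of size `s` with sparse
pairs between them does; each of these sets may be complete. -/
structure IsSparseUnion (G : SimpleGraph V) (n s : ℕ) (R : Finset V) : Prop where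
  card_eq : R.card = n * s
  sum_le : ∑ x ∈ R, (nbrIn G x R).card ≤ 3 * n * s ^ 2

lemma IsSparseUnion.union [DecidableEq V] {n s : ℕ} {A R : Finset V} (hR : IsSparseUnion G n s R)
    (hA : A.card = s) (hdisj : Disjoint A R) (hdeg : ∀ a ∈ A, (nbrIn G a R).card ≤ s) :
    IsSparseUnion G (n + 1) s (A ∪ R) where
  card_eq := by rw [Finset.card_union_of_disjoint hdisj, hA, hR.card_eq]; ring
  sum_le := by
    have hAR : ∑ a ∈ A, (nbrIn G a R).card ≤ s ^ 2 := by
      simpa [hA, sq] using Finset.sum_le_card_nsmul A _ s hdeg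
    have hAA : ∑ a ∈ A, (nbrIn G a A).card ≤ s ^ 2 := by
      simpa [hA, sq] using Finset.sum_le_card_nsmul A _ s fun a _ =>
        (Finset.card_le_card (nbrIn_subset G a A)).trans_eq hA
    calc ∑ x ∈ A ∪ R, (nbrIn G x (A ∪ R)).card
        ≤ ∑ x ∈ A ∪ R, ((nbrIn G x A).card + (nbrIn G x R).card) :=
          Finset.sum_le_sum fun x _ => card_nbrIn_union_le G x A R
      _ = (∑ a ∈ A, (nbrIn G a A).card + ∑ a ∈ A, (nbrIn G a R).card) +
          (∑ a ∈ A, (nbrIn G a R).card + ∑ x ∈ R, (nbrIn G x R).card) := by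
          rw [Finset.sum_union hdisj, Finset.sum_add_distrib, Finset.sum_add_distrib,
            sum_card_nbrIn_comm G R A]
      _ ≤ (s ^ 2 + s ^ 2) + (s ^ 2 + 3 * n * s ^ 2) := by gcongr; exact hR.sum_le
      _ = 3 * (n + 1) * s ^ 2 := by ring

lemma isSparseUnion_zero (G : SimpleGraph V) (s : ℕ) : IsSparseUnion G 0 s ∅ :=
  ⟨by simp, by simp⟩

/-- Every not too small set `P` of vertices of an `X`-free graph contains a sparse union of `n true`
sets in the graph or of `n false` sets in its complement, of size at least `δ * |P|` each. -/
def SparseUnionBound (X : SimpleGraph W) (n : Bool → ℕ) (δ : ℝ) : Prop :=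
  ∀ (V : Type u) (G : SimpleGraph V), ¬ Nonempty (X ↪g G) → ∀ P : Finset V, 1 ≤ δ * P.card →
    ∃ t, ∃ s : ℕ, ∃ R ⊆ P, δ * P.card ≤ s ∧ s ≤ P.card ∧ IsSparseUnion (side G t) (n t) s R

lemma SparseUnionBound.anti {X : SimpleGraph W} {n : Bool → ℕ} {δ δ' : ℝ}
    (h : SparseUnionBound.{u} X n δ) (hδ : δ' ≤ δ) : SparseUnionBound.{u} X n δ' :=
  fun V G hX P hP =>
    have hle : δ' * P.card ≤ δ * P.card := by gcongr
    let ⟨t, s, R, hR, hs, hunion⟩ := h V G hX P (hP.trans hle)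
    ⟨t, s, R, hR, hle.trans hs, hunion⟩

lemma sparseUnionBound_of_eq_zero (X : SimpleGraph W) {n : Bool → ℕ} {t : Bool} (ht : n t = 0) :
    SparseUnionBound.{u} X n 1 := fun _ _ _ P _ =>
  ⟨t, P.card, ∅, P.empty_subset, by simp, le_rfl, ht ▸ isSparseUnion_zero _ _⟩

lemma SparseUnionBound.exists_of_update [Finite W] {X : SimpleGraph W} {n : Bool → ℕ}
    (hn : ∀ t, n t ≠ 0) {d : ℝ} (hd : 0 < d) (hd1 : d ≤ 1)
    (h : ∀ t, SparseUnionBound.{u} X (Function.update n t (n t - 1)) d) :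
    ∃ δ, 0 < δ ∧ SparseUnionBound.{u} X n δ := by
  classical
  obtain ⟨e, he, hpair⟩ := exists_disjoint_isSparseTo.{u} X hd
  refine ⟨d * e, by positivity, fun V G hX P hP => ?_⟩
  have hle : d * e * P.card ≤ e * P.card := by
    gcongr
    exact mul_le_of_le_one_left he.le hd1
  obtain ⟨t, A, hA, T, hT, hdisj, hAT, heT, hsparse⟩ := hpair V G hX P (hP.trans hle)
  have hdT : d * e * P.card ≤ d * T.card := by rw [mul_assoc]; gcongr
  obtain ⟨t', s, R, hR, hds, hsT, hunion⟩ := h t V G hX T (hP.trans hdT)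
  have hsP : s ≤ P.card := hsT.trans (Finset.card_le_card hT)
  obtain rfl | htt := eq_or_ne t' t
  · rw [Function.update_self] at hunion
    obtain ⟨A', hA', hA'card⟩ := Finset.exists_subset_card_eq (hsT.trans_eq hAT.symm)
    refine ⟨t', s, A' ∪ R, Finset.union_subset (hA'.trans hA) (hR.trans hT), hdT.trans hds, hsP, ?_⟩
    rw [← Nat.sub_add_cancel (Nat.pos_of_ne_zero (hn t'))]
    refine hunion.union hA'card (hdisj.mono hA' hR) fun a ha => ?_
    have hdeg := (hsparse a (hA' ha)).trans hds
    exact (card_nbrIn_mono _ a hR).trans (by exact_mod_cast hdeg)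
  · rw [Function.update_of_ne htt] at hunion
    exact ⟨t', s, R, hR.trans hT, hdT.trans hds, hsP, hunion⟩

lemma exists_sparseUnionBound [Finite W] (X : SimpleGraph W) (n : Bool → ℕ) :
    ∃ δ, 0 < δ ∧ SparseUnionBound.{u} X n δ := by
  induction hN : n true + n false generalizing n with
  | zero => exact ⟨1, one_pos, sparseUnionBound_of_eq_zero X (by omega : n true = 0)⟩
  | succ N ih =>
    by_cases hzero : ∃ t, n t = 0
    · obtain ⟨t, ht⟩ := hzero
      exact ⟨1, one_pos, sparseUnionBound_of_eq_zero X ht⟩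
    push Not at hzero
    choose δ hδ hbound using fun t => ih (Function.update n t (n t - 1)) (by
      have := hzero true
      have := hzero false
      cases t <;> simp <;> omega)
    refine SparseUnionBound.exists_of_update hzero (d := min 1 (min (δ true) (δ false)))
      (lt_min one_pos (lt_min (hδ _) (hδ _))) (min_le_left _ _) fun t => (hbound t).anti ?_
    cases t <;> simp

lemma IsSparseUnion.exists_isSparseTo {n s : ℕ} {R : Finset V} {ε : ℝ} (hR : IsSparseUnion G n s R)
    (hε : 12 ≤ ε * n) : ∃ R' ⊆ R, (n * s : ℝ) ≤ 2 * R'.card ∧ IsSparseTo G ε R' R' := by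
  classical
  set R' := R.filter fun x => (nbrIn G x R).card ≤ 6 * s with hR'
  set B := R.filter fun x => ¬ (nbrIn G x R).card ≤ 6 * s with hB
  have hcard : R'.card + B.card = n * s :=
    (Finset.card_filter_add_card_filter_not _).trans hR.card_eq
  have hsum : B.card * (6 * s) ≤ 3 * n * s ^ 2 :=
    calc B.card * (6 * s) ≤ ∑ x ∈ B, (nbrIn G x R).card :=
          Finset.card_nsmul_le_sum B _ _ fun x hx => (not_le.1 (Finset.mem_filter.1 hx).2).le
      _ ≤ ∑ x ∈ R, (nbrIn G x R).card :=
          Finset.sum_le_sum_of_subset (Finset.filter_subset _ _)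
      _ ≤ 3 * n * s ^ 2 := hR.sum_le
  have hhalf : n * s ≤ 2 * R'.card := by
    obtain rfl | hs := s.eq_zero_or_pos
    · simp
    · have : 2 * B.card ≤ n * s := Nat.le_of_mul_le_mul_right (by linarith) (by omega : 0 < 3 * s)
      omega
  have hhalf' : (n * s : ℝ) ≤ 2 * R'.card := by exact_mod_cast hhalf
  have hn : 0 < ε := pos_of_mul_pos_left (by linarith) n.cast_nonneg
  refine ⟨R', Finset.filter_subset _ _, hhalf', fun x hx => ?_⟩
  calc ((nbrIn G x R').card : ℝ) ≤ (nbrIn G x R).card := by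
        exact_mod_cast card_nbrIn_mono G x (Finset.filter_subset _ _)
    _ ≤ 6 * s := by exact_mod_cast (Finset.mem_filter.1 hx).2
    _ ≤ ε * R'.card := by nlinarith [mul_le_mul_of_nonneg_right hε s.cast_nonneg (α := ℝ)]

/-- Rödl's theorem. -/
lemma exists_isSparseTo_self [Finite W] (X : SimpleGraph W) {ε : ℝ} (hε : 0 < ε) :
    ∃ δ : ℝ, 0 < δ ∧ ∀ (V : Type u) (G : SimpleGraph V), ¬ Nonempty (X ↪g G) →
      ∀ P : Finset V, P.Nonempty → ∃ t, ∃ R ⊆ P, R.Nonempty ∧ δ * P.card ≤ R.card ∧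
        IsSparseTo (side G t) ε R R := by
  obtain ⟨n, hn⟩ := exists_nat_ge (12 / ε)
  rw [div_le_iff₀' hε] at hn
  have hn1 : (1 : ℝ) ≤ n := by
    have : 0 < n := Nat.pos_of_ne_zero fun h0 => by rw [h0] at hn; norm_num at hn
    exact_mod_cast this
  obtain ⟨δ, hδ, h⟩ := exists_sparseUnionBound.{u} X fun _ => n
  refine ⟨δ / 2, by positivity, fun V G hX P hP => ?_⟩
  by_cases hsmall : 1 ≤ δ * P.card
  · obtain ⟨t, s, R, hR, hs, -, hunion⟩ := h V G hX P hsmall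
    obtain ⟨R', hR', hcard, hsparse⟩ := hunion.exists_isSparseTo hn
    have hle : δ * P.card ≤ 2 * R'.card := by nlinarith
    have hpos : (0 : ℝ) < R'.card := by linarith
    exact ⟨t, R', hR'.trans hR, Finset.card_pos.1 (by exact_mod_cast hpos), by linarith, hsparse⟩
  · obtain ⟨x, hx⟩ := hP
    refine ⟨true, {x}, Finset.singleton_subset_iff.2 hx, Finset.singleton_nonempty x, ?_, ?_⟩
    · rw [Finset.card_singleton]
      push_cast
      linarith
    · intro y hy
      obtain rfl := Finset.mem_singleton.1 hy
      have : nbrIn (side G true) y {y} = ∅ := by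
        ext z
        simp only [mem_nbrIn, Finset.mem_singleton, Finset.notMem_empty, iff_false]
        rintro ⟨rfl, hz⟩
        exact hz.ne rfl
      rw [this]
      simpa using hε.le

end Rodl

section Labels

lemma exists_balanced_coloring {ι : Type*} (s : Finset ι) {f : ι → ℝ} {w : ℝ} {N : ℕ}
    (hf : ∀ i ∈ s, 0 ≤ f i) (hfw : ∀ i ∈ s, f i ≤ w) (hw : 0 ≤ w) (hN : 0 < N) :
    ∃ col : ι → Fin N, ∀ b, ∑ i ∈ s with col i = b, f i ≤ (∑ i ∈ s, f i) / N + w := by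
  classical
  have hN' : (N : ℝ) ≠ 0 := by exact_mod_cast hN.ne'
  induction s using Finset.induction_on with
  | empty => exact ⟨fun _ => ⟨0, hN⟩, by simp [hw]⟩
  | insert a s ha ih =>
    obtain ⟨hfa, hf⟩ := Finset.forall_mem_insert _ _ _ |>.1 hf
    obtain ⟨hfwa, hfw⟩ := Finset.forall_mem_insert _ _ _ |>.1 hfw
    obtain ⟨col, hcol⟩ := ih hf hfw
    obtain ⟨b₀, -, hb₀⟩ : ∃ b ∈ (Finset.univ : Finset (Fin N)),
        ∑ i ∈ s with col i = b, f i ≤ (∑ i ∈ s, f i) / N := by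
      refine Finset.exists_le_of_sum_le ⟨⟨0, hN⟩, Finset.mem_univ _⟩ (le_of_eq ?_)
      rw [Finset.sum_fiberwise, Finset.sum_const, Finset.card_univ, Fintype.card_fin,
        nsmul_eq_mul, mul_div_cancel₀ _ hN']
    have hrest (b : Fin N) : ∑ i ∈ s with Function.update col a b₀ i = b, f i =
        ∑ i ∈ s with col i = b, f i := by
      refine Finset.sum_congr (Finset.filter_congr fun i hi => ?_) fun _ _ => rfl
      rw [Function.update_of_ne (ne_of_mem_of_not_mem hi ha)]
    have hmean : (∑ i ∈ s, f i) / N ≤ (∑ i ∈ insert a s, f i) / N := by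
      rw [Finset.sum_insert ha]
      gcongr
      linarith
    refine ⟨Function.update col a b₀, fun b => ?_⟩
    rw [Finset.filter_insert]
    split_ifs with h
    · obtain rfl : b₀ = b := by rwa [Function.update_self] at h
      rw [Finset.sum_insert (by simp [ha]), hrest]
      linarith
    · rw [hrest]
      linarith [hcol b]

variable {V L : Type*} {P Q : Finset V} {c : V → L} {l : L} {u : V}

/-- The vertices of `P` to which the labelling `c` gives the label `l`. -/
noncomputable def labelClass (c : V → L) (l : L) (P : Finset V) : Finset V :=
  open Classical in P.filter (c · = l)

@[simp] lemma mem_labelClass : u ∈ labelClass c l P ↔ u ∈ P ∧ c u = l := by simp [labelClass]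

lemma labelClass_mono (c : V → L) (l : L) (h : Q ⊆ P) : labelClass c l Q ⊆ labelClass c l P :=
  fun _ hu => mem_labelClass.2 ⟨h (mem_labelClass.1 hu).1, (mem_labelClass.1 hu).2⟩

lemma card_filter_comp_eq_sum_card_labelClass [DecidableEq L] (p : L → Prop) [DecidablePred p]
    (c : V → L) (P : Finset V) :
    (P.filter fun u => p (c u)).card = ∑ l ∈ P.image c with p l, (labelClass c l P).card := by
  rw [Finset.card_eq_sum_card_fiberwise (f := c) (t := (P.image c).filter p)]
  · refine Finset.sum_congr rfl fun l hl => congrArg _ ?_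
    ext u
    simp only [Finset.mem_filter, mem_labelClass]
    constructor
    · exact fun h => ⟨h.1.1, h.2⟩
    · rintro ⟨hu, rfl⟩
      exact ⟨⟨hu, (Finset.mem_filter.1 hl).2⟩, rfl⟩
  · intro u hu
    obtain ⟨huP, hpu⟩ := Finset.mem_filter.1 hu
    exact Finset.mem_filter.2 ⟨Finset.mem_image_of_mem c huP, hpu⟩

lemma exists_subset_avoiding_label {ε : ℝ} (hε : 0 < ε) (hε1 : ε ≤ 1) (A : Finset V)
    (hc : ∀ l, ((labelClass c l P).card : ℝ) ≤ ε * P.card) :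
    ∃ A' ⊆ A, ε * A.card ≤ A'.card ∧ ∃ B ⊆ P, (B.card : ℝ) ≤ 3 * ε * P.card ∧
      ∀ a ∈ A', ∀ u ∈ P, u ∉ B → c a ≠ c u := by
  classical
  have hfloor : 1 ≤ ⌊ε⁻¹⌋₊ := (Nat.one_le_floor_iff _).2 ((one_le_inv₀ hε).2 hε1)
  set N := ⌊ε⁻¹⌋₊
  have hN : (1 : ℝ) ≤ N := by exact_mod_cast hfloor
  have hεN : ε * N ≤ 1 := by
    rw [← le_div_iff₀' hε, one_div]
    exact Nat.floor_le (inv_nonneg.2 hε.le)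
  have hNε : 1 ≤ 2 * ε * N := by
    have hlt : ε⁻¹ < N + 1 := Nat.lt_floor_add_one _
    rw [inv_lt_iff_one_lt_mul₀' hε] at hlt
    nlinarith
  obtain ⟨col, hcol⟩ := exists_balanced_coloring (P.image c)
    (f := fun l => ((labelClass c l P).card : ℝ)) (fun _ _ => Nat.cast_nonneg _)
    (fun l _ => hc l) (by positivity) hfloor
  obtain ⟨b, -, hb⟩ := Finset.exists_le_card_fiber_of_nsmul_le_card_of_maps_to
    (s := A) (t := Finset.univ) (f := fun a => col (c a)) (b := ε * A.card) (by simp)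
    ⟨⟨0, hfloor⟩, Finset.mem_univ _⟩ (by
      rw [Finset.card_univ, Fintype.card_fin, nsmul_eq_mul]
      nlinarith [A.card.cast_nonneg (α := ℝ)])
  refine ⟨A.filter fun a => col (c a) = b, Finset.filter_subset _ _, hb,
    P.filter fun u => col (c u) = b, Finset.filter_subset _ _, ?_, fun a ha u hu huB hau => huB ?_⟩
  · have hcard := hcol b
    have hsum : ∑ l ∈ P.image c, (labelClass c l P).card = P.card := by
      simpa using (card_filter_comp_eq_sum_card_labelClass (fun _ => True) c P).symm
    rw [← Nat.cast_sum, ← Nat.cast_sum, hsum,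
      ← card_filter_comp_eq_sum_card_labelClass (col · = b)] at hcard
    have hdiv : (P.card : ℝ) / N ≤ 2 * ε * P.card := by
      rw [div_le_iff₀ (by positivity)]
      nlinarith [P.card.cast_nonneg (α := ℝ)]
    linarith
  · exact Finset.mem_filter.2 ⟨hu, hau ▸ (Finset.mem_filter.1 ha).2⟩

lemma exists_subset_avoiding_labels {ε : ℝ} (hε : 0 < ε) (hε1 : ε ≤ 1) (cs : List (V → L))
    (A : Finset V) (hcs : ∀ c ∈ cs, ∀ l, ((labelClass c l P).card : ℝ) ≤ ε * P.card) :
    ∃ A' ⊆ A, ε ^ cs.length * A.card ≤ A'.card ∧ ∃ B ⊆ P,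
      (B.card : ℝ) ≤ cs.length * (3 * ε * P.card) ∧
      ∀ c ∈ cs, ∀ a ∈ A', ∀ u ∈ P, u ∉ B → c a ≠ c u := by
  classical
  induction cs generalizing A with
  | nil => exact ⟨A, subset_rfl, by simp, ∅, by simp, by simp, by simp⟩
  | cons c cs ih =>
    obtain ⟨hc, hcs⟩ := List.forall_mem_cons.1 hcs
    obtain ⟨A₁, hA₁, hcard₁, B₁, hB₁, hBcard₁, h₁⟩ := exists_subset_avoiding_label hε hε1 A hc
    obtain ⟨A₂, hA₂, hcard₂, B₂, hB₂, hBcard₂, h₂⟩ := ih A₁ hcs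
    refine ⟨A₂, hA₂.trans hA₁, ?_, B₁ ∪ B₂, Finset.union_subset hB₁ hB₂, ?_, ?_⟩
    · calc ε ^ (c :: cs).length * A.card
          = ε ^ cs.length * (ε * A.card) := by rw [List.length_cons, pow_succ]; ring
        _ ≤ ε ^ cs.length * A₁.card := by gcongr
        _ ≤ A₂.card := hcard₂
    · have hunion : ((B₁ ∪ B₂).card : ℝ) ≤ B₁.card + B₂.card := by
        exact_mod_cast Finset.card_union_le _ _
      rw [List.length_cons]
      push_cast
      linarith
    · simp only [Finset.notMem_union]
      refine List.forall_mem_cons.2 ⟨fun a ha u hu hnu => ?_, fun c' hc' a ha u hu hnu => ?_⟩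
      · exact h₁ a (hA₂ ha) u hu hnu.1
      · exact h₂ c' hc' a ha u hu hnu.2

/-- Every label class of every labelling in `cs` fills at most the fraction `exp (-m)` of `P`. -/
def LabelsSmall (P : Finset V) (cs : List (V → L)) (m : ℝ) : Prop :=
  ∀ c ∈ cs, ∀ l, ((labelClass c l P).card : ℝ) ≤ Real.exp (-m) * P.card

end Labels

section StarCovers

variable {V : Type u} {G : SimpleGraph V} {P U A B T : Finset V} {cs cs' : List (V → V)} {v : V}
  {D : ℕ} {ρ r : ℝ}

/-- The logarithm of `|T| / D`, where `D` bounds the degrees of a sparse graph on `T`. As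
`log 0 = 0`, the bound `D = 0` counts as `D = 1`. -/
noncomputable def gap (T : Finset V) (D : ℕ) : ℝ := logCard T - Real.log D

lemma natCast_eq_card_mul_exp_neg_gap (hP : P.Nonempty) (hD : 1 ≤ D) :
    (D : ℝ) = P.card * Real.exp (-gap P D) := by
  have hDpos : (0 : ℝ) < D := by exact_mod_cast hD
  rw [gap, neg_sub, Real.exp_sub, exp_logCard hP, Real.exp_log hDpos]
  field_simp

/-- A stable set `A` of neighbours of `v` whose neighbourhoods have size at most `D` and cover the
set `T` of non-neighbours of `v`, with no label of `cs` shared between `A` and `T`. -/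
structure StarCover (G : SimpleGraph V) (P : Finset V) (cs : List (V → V)) (v : V)
    (A T : Finset V) (D : ℕ) : Prop where
  subset_left : A ⊆ P
  subset_right : T ⊆ P
  nonempty : T.Nonempty
  adj : ∀ a ∈ A, G.Adj v a
  stable : ∀ a ∈ A, ∀ b ∈ A, ¬ G.Adj a b
  nonadj : ∀ u ∈ T, ¬ G.Adj v u ∧ v ≠ u
  cover : ∀ u ∈ T, ∃ a ∈ A, G.Adj a u
  degree_le : ∀ a ∈ A, (nbrIn G a T).card ≤ D
  label_ne : ∀ c ∈ cs, ∀ a ∈ A, ∀ u ∈ T, c a ≠ c u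

lemma StarCover.mono (h : StarCover G U cs' v A T D) (hU : U ⊆ P) (hcs : cs ⊆ cs') :
    StarCover G P cs v A T D :=
  { h with
    subset_left := h.subset_left.trans hU
    subset_right := h.subset_right.trans hU
    label_ne := fun c hc => h.label_ne c (hcs hc) }

lemma StarCover.one_le (h : StarCover G P cs v A T D) : 1 ≤ D := by
  obtain ⟨u, hu⟩ := h.nonempty
  obtain ⟨a, ha, hadj⟩ := h.cover u hu
  exact (Finset.card_pos.2 ⟨u, mem_nbrIn.2 ⟨hu, hadj⟩⟩).trans_le (h.degree_le a ha)

namespace Critical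

/-- Take `Z` to be a maximum stable set of `A`: it extends by every stable set of vertices not
adjacent to it, so by criticality only few vertices of `P` are not adjacent to it. -/
lemma exists_isIndepSet_dominating (h : Critical G ρ 0 P) (hρ : ρ ≤ 1) (hA : A ⊆ P)
    (hne : A.Nonempty) :
    ∃ Z ⊆ A, G.IsIndepSet (Z : Set V) ∧ ∃ U : Finset V,
      (U.card : ℝ) + P.card * ((A.card : ℝ) / P.card) ^ ρ ≤ P.card ∧
      ∀ u ∈ P, u ∉ U → u ∉ Z → ∃ z ∈ Z, G.Adj z u := by
  classical
  obtain ⟨Z, hZA, hZ, hZcard⟩ := exists_isClique_card_eq_cliqueNumOn Gᶜ A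
  rw [isClique_compl] at hZ
  set U := P.filter fun u => u ∉ Z ∧ ∀ z ∈ Z, ¬ G.Adj z u with hU
  have hUP : U ⊆ P := Finset.filter_subset _ _
  have hadd : (kappaOn G A : ℝ) + kappaOn G U ≤ kappaOn G P := by
    exact_mod_cast kappaOn_add_kappaOn_le G hA hUP hZA hZ hZcard fun z hz u hu =>
      (compl_adj _ _ _).2 ⟨ne_of_mem_of_not_mem hz (Finset.mem_filter.1 hu).2.1,
        (Finset.mem_filter.1 hu).2.2 z hz⟩
  refine ⟨Z, hZA, hZ, U, ?_, fun u hu huU huZ => ?_⟩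
  · have hPpos : (0 : ℝ) < P.card := by exact_mod_cast (hne.mono hA).card_pos
    have hκpos : (0 : ℝ) < kappaOn G P := by exact_mod_cast one_le_kappaOn G (hne.mono hA)
    have hUκ : (U.card : ℝ) / P.card * kappaOn G P ≤ kappaOn G U := by
      obtain hempty | hUne := U.eq_empty_or_nonempty
      · simp [hempty]
      · refine le_trans ?_ (h.rpow_mul_kappaOn_le hUP hUne)
        gcongr
        refine Real.self_le_rpow_of_le_one (by positivity) ?_ hρ
        rw [div_le_one hPpos]
        exact_mod_cast Finset.card_le_card hUP
    have hsum : (U.card : ℝ) / P.card + ((A.card : ℝ) / P.card) ^ ρ ≤ 1 :=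
      le_of_mul_le_mul_right (by linarith [h.rpow_mul_kappaOn_le hA hne]) hκpos
    calc (U.card : ℝ) + P.card * ((A.card : ℝ) / P.card) ^ ρ
        = P.card * ((U.card : ℝ) / P.card + ((A.card : ℝ) / P.card) ^ ρ) := by field_simp
      _ ≤ P.card := mul_le_of_le_one_right hPpos.le hsum
  · by_contra! hnonadj
    exact huU (Finset.mem_filter.2 ⟨hu, huZ, hnonadj⟩)

lemma exists_starCover_of_avoiding (h : Critical G ρ 0 P) (hρ : ρ ≤ 1) (hA : A ⊆ nbrIn G v P)
    (hne : A.Nonempty) (hv : (nbrIn G v P).card ≤ D)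
    (hdeg : ∀ x ∈ P, (nbrIn G x P).card ≤ D)
    (hlabel : ∀ c ∈ cs, ∀ a ∈ A, ∀ u ∈ P, u ∉ B → c a ≠ c u) (hr : 0 < r)
    (hle : D + 1 + B.card + r ≤ P.card * ((A.card : ℝ) / P.card) ^ ρ) :
    ∃ Z T, StarCover G P cs v Z T D ∧ r ≤ T.card := by
  classical
  have hAP : A ⊆ P := hA.trans (nbrIn_subset G v P)
  obtain ⟨Z, hZA, hZ, U, hU, hdom⟩ := h.exists_isIndepSet_dominating hρ hAP hne
  set T := P \ (U ∪ (nbrIn G v P ∪ insert v B)) with hT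
  have hmem {u : V} (hu : u ∈ T) : u ∈ P ∧ u ∉ U ∧ u ∉ nbrIn G v P ∧ v ≠ u ∧ u ∉ B := by
    simpa only [hT, Finset.mem_sdiff, Finset.mem_union, Finset.mem_insert, not_or, ne_comm] using hu
  have hTP : T ⊆ P := Finset.sdiff_subset
  have hTcard : (P.card : ℝ) ≤ T.card + (U.card + (D + (B.card + 1))) := by
    have hremove : P.card ≤ T.card + (U ∪ (nbrIn G v P ∪ insert v B)).card :=
      Nat.sub_le_iff_le_add.1 (Finset.le_card_sdiff _ _)
    have hunion := Finset.card_union_le U (nbrIn G v P ∪ insert v B)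
    have hunion' := Finset.card_union_le (nbrIn G v P) (insert v B)
    have hinsert := Finset.card_insert_le v B
    exact_mod_cast (by omega : P.card ≤ T.card + (U.card + (D + (B.card + 1))))
  have hTpos : (0 : ℝ) < T.card := by linarith
  exact ⟨Z, T,
    { subset_left := hZA.trans hAP
      subset_right := hTP
      nonempty := Finset.card_pos.1 (by exact_mod_cast hTpos)
      adj := fun a ha => (mem_nbrIn.1 (hA (hZA ha))).2
      stable := fun a ha b hb hab => hZ ha hb hab.ne hab
      nonadj := fun u hu => ⟨fun hadj => (hmem hu).2.2.1 (mem_nbrIn.2 ⟨(hmem hu).1, hadj⟩),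
        (hmem hu).2.2.2.1⟩
      cover := fun u hu => hdom u (hmem hu).1 (hmem hu).2.1 fun huZ =>
        (hmem hu).2.2.1 (hA (hZA huZ))
      degree_le := fun a ha => (card_nbrIn_mono G a hTP).trans (hdeg a (hAP (hZA ha)))
      label_ne := fun c hc a ha u hu =>
        hlabel c hc a (hZA ha) u (hmem hu).1 (hmem hu).2.2.2.2 },
    by linarith⟩

end Critical

lemma le_div_rpow_of_pow_mul_le {μ Y d q n : ℝ} {J k : ℕ} (hμ : 0 < μ) (hμ1 : μ ≤ 1) (hY : 0 ≤ Y)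
    (hk : k ≤ J) (hn : 0 < n) (hd : d = n * Real.exp (-Y))
    (hq : Real.exp (-(μ * Y)) ^ k * d ≤ q) :
    Real.exp (-(μ * Y / 2)) ≤ (q / n) ^ (μ / (2 * (J + 1))) := by
  have hkJ : (k : ℝ) * (μ * Y) ≤ J * Y := by
    gcongr
    nlinarith
  have hexp : Real.exp (-((J + 1) * Y)) ≤ q / n := by
    rw [le_div_iff₀ hn]
    refine le_trans ?_ hq
    rw [hd, ← Real.exp_nat_mul, mul_left_comm, ← Real.exp_add, mul_comm]
    gcongr
    linarith
  calc Real.exp (-(μ * Y / 2)) = Real.exp (-((J + 1) * Y)) ^ (μ / (2 * (J + 1))) := by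
        rw [← Real.exp_mul]
        congr 1
        field_simp
    _ ≤ (q / n) ^ (μ / (2 * (J + 1))) := by gcongr

lemma Critical.exists_starCover_of_labelClass_le {J : ℕ} {x : ℝ} (h : Critical G ρ 0 P)
    (hρ : ρ ≤ 1) (hx : 0 < x) (hxJ : 3 * (J + 1) * x ≤ 1) (hlen : cs.length ≤ J) (hD : 1 ≤ D)
    (hdeg : ∀ u ∈ P, (nbrIn G u P).card ≤ D) (hv : (nbrIn G v P).card = D)
    (hDx : (D : ℝ) ≤ P.card * x ^ 2)
    (hroot : ∀ q : ℝ, (x ^ 2) ^ cs.length * D ≤ q → x ≤ (q / P.card) ^ ρ)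
    (hcs : ∀ c ∈ cs, ∀ l, ((labelClass c l P).card : ℝ) ≤ x ^ 2 * P.card) :
    ∃ A T, StarCover G P cs v A T D ∧ P.card * x ^ 2 ≤ T.card := by
  have hP : P.Nonempty := (Finset.card_pos.1 (by omega)).mono (nbrIn_subset G v P)
  have hPpos : (0 : ℝ) < P.card := by exact_mod_cast hP.card_pos
  have hDpos : (1 : ℝ) ≤ D := by exact_mod_cast hD
  have hx1 : x ≤ 1 := by nlinarith [J.cast_nonneg (α := ℝ)]
  obtain ⟨A, hA, hAcard, B, -, hBcard, havoid⟩ := exists_subset_avoiding_labels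
    (by positivity) (pow_le_one₀ hx.le hx1) cs (nbrIn G v P) hcs
  rw [hv] at hAcard
  have hApos : (0 : ℝ) < A.card := lt_of_lt_of_le (by positivity) hAcard
  have hB : (B.card : ℝ) ≤ J * (3 * (P.card * x ^ 2)) := by
    refine hBcard.trans ?_
    rw [mul_assoc 3, mul_comm (x ^ 2)]
    gcongr
  have hroom : 3 * (J + 1) * (P.card * x ^ 2) ≤ P.card * x := by
    nlinarith [mul_le_mul_of_nonneg_left hxJ (by positivity : 0 ≤ P.card * x)]
  exact h.exists_starCover_of_avoiding hρ hA (Finset.card_pos.1 (by exact_mod_cast hApos))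
    hv.le hdeg havoid (by positivity)
    (by nlinarith [mul_le_mul_of_nonneg_left (hroot _ hAcard) hPpos.le])

/-- In a set `P` critical with exponent `ρ`, a vertex of maximum degree `D`, where `D / |P|` and the
label classes are small, is the centre of a star cover of nearly all of `P`. -/
def StarCoverBound (J : ℕ) (μ ρ y : ℝ) : Prop :=
  ∀ (V : Type u) (G : SimpleGraph V) (P : Finset V) (cs : List (V → V)) (D : ℕ) (v : V),
    Critical G ρ 0 P → cs.length ≤ J → 1 ≤ D → (∀ x ∈ P, (nbrIn G x P).card ≤ D) →
    (nbrIn G v P).card = D → y ≤ gap P D → LabelsSmall P cs (μ * gap P D) →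
    ∃ A T, StarCover G P cs v A T D ∧ logCard P ≤ logCard T + μ * gap P D

lemma StarCoverBound.anti {J : ℕ} {μ ρ y y' : ℝ} (h : StarCoverBound.{u} J μ ρ y) (hy : y ≤ y') :
    StarCoverBound.{u} J μ ρ y' := fun V G P cs D v hcritical hlen hD hdeg hv hgap =>
  h V G P cs D v hcritical hlen hD hdeg hv (hy.trans hgap)

lemma exists_starCoverBound (J : ℕ) {μ : ℝ} (hμ : 0 < μ) (hμ1 : μ ≤ 1) :
    ∃ ρ y : ℝ, 0 < ρ ∧ ρ < 1 ∧ StarCoverBound.{u} J μ ρ y := by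
  have hρ : μ / (2 * (J + 1)) < 1 := by
    rw [div_lt_one (by positivity)]
    linarith
  refine ⟨μ / (2 * (J + 1)), 2 * Real.log (3 * (J + 1)) / μ, by positivity, hρ, ?_⟩
  intro V G P cs D v hcritical hlen hD hdeg hv hy hcs
  have hlog : 0 ≤ Real.log (3 * (J + 1)) :=
    Real.log_nonneg (by linarith [J.cast_nonneg (α := ℝ)])
  have hY : 0 ≤ gap P D := le_trans (by positivity) hy
  have hP : P.Nonempty := (Finset.card_pos.1 (by omega)).mono (nbrIn_subset G v P)
  have hPpos : (0 : ℝ) < P.card := by exact_mod_cast hP.card_pos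
  have hDY := natCast_eq_card_mul_exp_neg_gap hP hD
  set Y := gap P D
  set x := Real.exp (-(μ * Y / 2)) with hx
  have hxsq : Real.exp (-(μ * Y)) = x ^ 2 := by
    rw [hx, ← Real.exp_nat_mul]
    congr 1
    push_cast
    ring
  have hxJ : 3 * (J + 1) * x ≤ 1 := by
    rw [div_le_iff₀ hμ] at hy
    have : x ≤ Real.exp (-Real.log (3 * (J + 1))) := Real.exp_le_exp.2 (by linarith)
    rwa [Real.exp_neg, Real.exp_log (by positivity), ← one_div, le_div_iff₀' (by positivity)]
      at this
  obtain ⟨A, T, hcover, hTcard⟩ := hcritical.exists_starCover_of_labelClass_le hρ.le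
    (Real.exp_pos _) hxJ hlen hD hdeg hv (by rw [hDY, ← hxsq]; gcongr; nlinarith)
    (fun q hq => le_div_rpow_of_pow_mul_le hμ hμ1 hY hlen hPpos hDY (hxsq ▸ hq)) (hxsq ▸ hcs)
  refine ⟨A, T, hcover, ?_⟩
  have hlog := Real.log_le_log (by positivity) hTcard
  rw [Real.log_mul hPpos.ne' (by positivity), ← hxsq, Real.log_exp] at hlog
  simp only [logCard]
  linarith

end StarCovers

section Combs

variable {V : Type u} {G : SimpleGraph V} {P P' U S A T T' : Finset V} {cs cs' : List (V → V)}
  {v : V} {l : V → V} {D D' N n : ℕ}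

/-- A vertex `v` joined to a stable set `S` (the spine), together with non-neighbours `U` of `v`
(the teeth), each tooth `u` having the unique neighbour `l u` in `S`; no label of `cs` is shared
between `S` and `U`. -/
structure Comb (G : SimpleGraph V) (P : Finset V) (cs : List (V → V)) (v : V)
    (S U : Finset V) (l : V → V) : Prop where
  subset_left : S ⊆ P
  subset_right : U ⊆ P
  adj_center : ∀ s ∈ S, G.Adj v s
  stable : ∀ a ∈ S, ∀ b ∈ S, ¬ G.Adj a b
  nonadj : ∀ u ∈ U, ¬ G.Adj v u ∧ v ≠ u
  mem : ∀ u ∈ U, l u ∈ S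
  adj_iff : ∀ u ∈ U, ∀ s ∈ S, G.Adj s u ↔ s = l u
  label_ne : ∀ c ∈ cs, ∀ s ∈ S, ∀ u ∈ U, c s ≠ c u

lemma Comb.mono (h : Comb G P cs v S U l) (hP : P ⊆ P') (hcs : cs' ⊆ cs) :
    Comb G P' cs' v S U l :=
  { h with
    subset_left := h.subset_left.trans hP
    subset_right := h.subset_right.trans hP
    label_ne := fun c hc => h.label_ne c (hcs hc) }

/-- The vertices of `T` with a neighbour in `S`. -/
noncomputable def dominatedBy (G : SimpleGraph V) (S T : Finset V) : Finset V :=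
  open Classical in T.filter fun u => ∃ s ∈ S, G.Adj s u

/-- The vertices of `T` with exactly one neighbour in `S`. -/
noncomputable def uniquelyDominatedBy (G : SimpleGraph V) (S T : Finset V) : Finset V :=
  T.filter fun u => (nbrIn G u S).card = 1

@[simp] lemma mem_dominatedBy {u : V} :
    u ∈ dominatedBy G S T ↔ u ∈ T ∧ ∃ s ∈ S, G.Adj s u := by
  simp [dominatedBy]

lemma uniquelyDominatedBy_subset (G : SimpleGraph V) (S T : Finset V) :
    uniquelyDominatedBy G S T ⊆ T :=
  Finset.filter_subset _ _

lemma uniquelyDominatedBy_subset_dominatedBy (G : SimpleGraph V) (S T : Finset V) :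
    uniquelyDominatedBy G S T ⊆ dominatedBy G S T := fun u hu => by
  obtain ⟨huT, hcard⟩ := Finset.mem_filter.1 hu
  obtain ⟨s, hs⟩ := Finset.card_pos.1 (hcard.symm ▸ one_pos)
  exact mem_dominatedBy.2 ⟨huT, s, (mem_nbrIn.1 hs).1, (mem_nbrIn.1 hs).2.symm⟩

lemma card_dominatedBy_le (G : SimpleGraph V) (S T : Finset V) :
    (dominatedBy G S T).card ≤ ∑ s ∈ S, (nbrIn G s T).card := by
  classical
  refine (Finset.card_le_card fun u hu => ?_).trans Finset.card_biUnion_le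
  obtain ⟨huT, s, hs, hadj⟩ := mem_dominatedBy.1 hu
  exact Finset.mem_biUnion.2 ⟨s, hs, mem_nbrIn.2 ⟨huT, hadj⟩⟩

lemma two_mul_card_dominatedBy_le (G : SimpleGraph V) (S T : Finset V) :
    2 * (dominatedBy G S T).card ≤
      ∑ s ∈ S, (nbrIn G s T).card + (uniquelyDominatedBy G S T).card := by
  classical
  set N := dominatedBy G S T
  have hdegree (u : V) (hu : u ∈ N) :
      2 ≤ (nbrIn G u S).card + if u ∈ uniquelyDominatedBy G S T then 1 else 0 := by
    obtain ⟨huT, s, hs, hsu⟩ := mem_dominatedBy.1 hu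
    have hpos : 0 < (nbrIn G u S).card := Finset.card_pos.2 ⟨s, mem_nbrIn.2 ⟨hs, hsu.symm⟩⟩
    split_ifs with hunique
    · omega
    · have : (nbrIn G u S).card ≠ 1 := fun hone => hunique (Finset.mem_filter.2 ⟨huT, hone⟩)
      omega
  have hsum := Finset.card_nsmul_le_sum N _ 2 hdegree
  rw [Finset.sum_add_distrib, Finset.sum_ite_mem, ← Finset.card_eq_sum_ones, smul_eq_mul,
    Finset.inter_eq_right.2 (uniquelyDominatedBy_subset_dominatedBy G S T),
    sum_card_nbrIn_comm G N S] at hsum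
  have hle : ∑ s ∈ S, (nbrIn G s N).card ≤ ∑ s ∈ S, (nbrIn G s T).card :=
    Finset.sum_le_sum fun s _ => card_nbrIn_mono G s fun u hu => (mem_dominatedBy.1 hu).1
  omega

/-- Choose `S` maximal subject to dominating at least `3 / 4` of the `D * |S|` vertices it could. -/
lemma exists_subset_card_nbrIn_sdiff_dominatedBy_le [DecidableEq V] (G : SimpleGraph V)
    (A T : Finset V) (D : ℕ) :
    ∃ S ⊆ A, 3 * (S.card * D) ≤ 4 * (dominatedBy G S T).card ∧
      ∀ a ∈ A, 4 * (nbrIn G a (T \ dominatedBy G S T)).card ≤ 3 * D := by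
  obtain ⟨S, hS, hmax⟩ := Finset.exists_max_image
    (A.powerset.filter fun S => 3 * (S.card * D) ≤ 4 * (dominatedBy G S T).card) Finset.card
    ⟨∅, by simp⟩
  simp only [Finset.mem_filter, Finset.mem_powerset] at hS hmax
  refine ⟨S, hS.1, hS.2, fun a ha => ?_⟩
  set R := T \ dominatedBy G S T with hR
  by_cases haS : a ∈ S
  · have : nbrIn G a R = ∅ := by
      ext u
      simp only [hR, mem_nbrIn, Finset.mem_sdiff, mem_dominatedBy, Finset.notMem_empty, iff_false]
      exact fun hu => hu.1.2 ⟨hu.1.1, a, haS, hu.2⟩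
    simp [this]
  · by_contra! hlt
    have hinsert : dominatedBy G (insert a S) T = dominatedBy G S T ∪ nbrIn G a R := by
      ext u
      simp only [hR, mem_dominatedBy, Finset.exists_mem_insert, Finset.mem_union, mem_nbrIn,
        Finset.mem_sdiff]
      by_cases hdom : ∃ s ∈ S, G.Adj s u <;> simp only [hdom] <;> tauto
    have hdisj : Disjoint (dominatedBy G S T) (nbrIn G a R) :=
      Finset.disjoint_sdiff.mono_right (nbrIn_subset G a R)
    have hcard := Finset.card_insert_of_notMem haS
    have hle := hmax (insert a S) ⟨Finset.insert_subset ha hS.1, by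
      rw [hcard, hinsert, Finset.card_union_of_disjoint hdisj]
      linarith [hS.2]⟩
    omega

namespace StarCover

lemma restrict (h : StarCover G P cs v A T D) (hT : T' ⊆ T) (hne : T'.Nonempty)
    (hD : ∀ a ∈ A, (nbrIn G a T').card ≤ D') : StarCover G P cs v A T' D' :=
  { h with
    subset_right := hT.trans h.subset_right
    nonempty := hne
    nonadj := fun u hu => h.nonadj u (hT hu)
    cover := fun u hu => h.cover u (hT hu)
    degree_le := hD
    label_ne := fun c hc a ha u hu => h.label_ne c hc a ha u (hT hu) }

lemma exists_comb_uniquelyDominatedBy (h : StarCover G P cs v A T D) (hS : S ⊆ A) :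
    ∃ l, Comb G P cs v S (uniquelyDominatedBy G S T) l ∧
      ∀ x, (labelClass l x (uniquelyDominatedBy G S T)).card ≤ D := by
  set U := uniquelyDominatedBy G S T
  have hUT : U ⊆ T := uniquelyDominatedBy_subset G S T
  have hunique (u : V) (hu : u ∈ U) : ∃ s ∈ S, ∀ s' ∈ S, G.Adj s' u ↔ s' = s := by
    obtain ⟨s, hs⟩ := Finset.card_eq_one.1 (Finset.mem_filter.1 hu).2
    have hmem (s' : V) : s' ∈ S ∧ G.Adj u s' ↔ s' = s := by
      rw [← mem_nbrIn, hs, Finset.mem_singleton]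
    exact ⟨s, ((hmem s).2 rfl).1, fun s' hs' => by rw [← hmem, G.adj_comm, and_iff_right hs']⟩
  have : Nonempty V := ⟨v⟩
  choose! l hlS hl using hunique
  refine ⟨l,
    { subset_left := hS.trans h.subset_left
      subset_right := hUT.trans h.subset_right
      adj_center := fun s hs => h.adj s (hS hs)
      stable := fun a ha b hb => h.stable a (hS ha) b (hS hb)
      nonadj := fun u hu => h.nonadj u (hUT hu)
      mem := hlS
      adj_iff := hl
      label_ne := fun c hc s hs u hu => h.label_ne c hc s (hS hs) u (hUT hu) }, fun x => ?_⟩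
  obtain hempty | ⟨u, hu⟩ := (labelClass l x U).eq_empty_or_nonempty
  · simp [hempty]
  · obtain ⟨huU, rfl⟩ := mem_labelClass.1 hu
    refine (Finset.card_le_card fun w hw => ?_).trans (h.degree_le (l u) (hS (hlS u huU)))
    obtain ⟨hw, hlw⟩ := mem_labelClass.1 hw
    exact mem_nbrIn.2 ⟨hUT hw, (hl w hw _ (hlS u huU)).2 hlw.symm⟩

/-- If `|S| * D` is small, then `T'` is most of `T`; if it is large, the comb has many teeth. -/
lemma exists_comb (h : StarCover G P cs v A T D) :
    ∃ S U T' l, U ⊆ T ∧ T' ⊆ T ∧ T.card ≤ T'.card + S.card * D ∧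
      (T'.Nonempty → StarCover G P cs v A T' (3 * D / 4)) ∧ S.card * D ≤ 2 * U.card ∧
      Comb G P cs v S U l ∧ ∀ x, (labelClass l x U).card ≤ D := by
  classical
  obtain ⟨S, hSA, hS, hdegree⟩ := exists_subset_card_nbrIn_sdiff_dominatedBy_le G A T D
  obtain ⟨l, hcomb, hclass⟩ := h.exists_comb_uniquelyDominatedBy hSA
  have hsum : ∑ s ∈ S, (nbrIn G s T).card ≤ S.card * D :=
    Finset.sum_le_card_nsmul _ _ _ fun s hs => h.degree_le s (hSA hs)
  have hdominated := card_dominatedBy_le G S T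
  have hunique := two_mul_card_dominatedBy_le G S T
  have hrest := Finset.le_card_sdiff (dominatedBy G S T) T
  refine ⟨S, uniquelyDominatedBy G S T, T \ dominatedBy G S T, l,
    uniquelyDominatedBy_subset G S T, Finset.sdiff_subset, by omega, fun hne => ?_, by omega,
    hcomb, hclass⟩
  exact h.restrict Finset.sdiff_subset hne fun a ha => by
    have := hdegree a ha
    omega

end StarCover

/-- Combs nested `n` times: the teeth of each comb contain the next one, each spine has at least `N`
vertices, and the labelling of each comb is added to the list for the next one. -/
def IteratedComb (G : SimpleGraph V) (N : ℕ) : ℕ → Finset V → List (V → V) → Prop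
  | 0, P, _ => P.Nonempty
  | n + 1, P, cs => ∃ v S U l, Comb G P cs v S U l ∧ N ≤ S.card ∧ IteratedComb G N n U (l :: cs)

lemma IteratedComb.mono (h : IteratedComb G N n P cs) (hP : P ⊆ P') (hcs : cs' ⊆ cs) :
    IteratedComb G N n P' cs' := by
  induction n generalizing P P' cs cs' with
  | zero => exact Finset.Nonempty.mono hP h
  | succ n ih =>
    obtain ⟨v, S, U, l, hcomb, hS, hU⟩ := h
    exact ⟨v, S, U, l, hcomb.mono hP hcs, hS, ih hU subset_rfl (List.cons_subset_cons l hcs)⟩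

end Combs

section ForestEmbedding

variable {V : Type u} {G : SimpleGraph V} {P U S : Finset V} {cs : List (V → V)} {v : V}
  {l : V → V} {N : ℕ} {W : Type*} {H : SimpleGraph W} {F : Finset W} {φ : W → V} {w : W}

lemma exists_forall_adj_eq_of_isAcyclic [Finite W] [Nonempty W] (hH : H.IsAcyclic) :
    ∃ w, ∀ x y, H.Adj w x → H.Adj w y → x = y := by
  obtain ⟨u, v, p, hp, hmax⟩ := Walk.exists_isPath_forall_isPath_length_le_length H
  have hsnd {x : W} (hx : H.Adj u x) : x = p.snd := by
    refine hH.eq_snd_of_adj_start hp hx (not_not.1 fun hxs => ?_)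
    simpa using hmax x v (.cons hx.symm p) (hp.cons hxs)
  exact ⟨u, fun x y hx hy => (hsnd hx).trans (hsnd hy).symm⟩

lemma exists_mem_forall_adj_eq_of_isAcyclic (hH : H.IsAcyclic) (hF : F.Nonempty) :
    ∃ w ∈ F, ∀ x ∈ F, ∀ y ∈ F, H.Adj w x → H.Adj w y → x = y := by
  have : Nonempty (F : Set W) := hF.coe_sort
  obtain ⟨⟨w, hw⟩, h⟩ := exists_forall_adj_eq_of_isAcyclic (hH.induce (F : Set W))
  exact ⟨w, hw, fun x hx y hy hwx hwy => congrArg Subtype.val (h ⟨x, hx⟩ ⟨y, hy⟩ hwx hwy)⟩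

/-- `φ` maps the vertices in `F` into `P`, respecting adjacency, and each labelling in `cs` gives
them distinct labels (so `φ` is injective on `F` as soon as `cs` is nonempty). -/
structure IsRainbowCopy (H : SimpleGraph W) (G : SimpleGraph V) (F : Finset W) (P : Finset V)
    (cs : List (V → V)) (φ : W → V) : Prop where
  mem : ∀ w ∈ F, φ w ∈ P
  adj_iff : ∀ w ∈ F, ∀ x ∈ F, G.Adj (φ w) (φ x) ↔ H.Adj w x
  injOn : ∀ c ∈ cs, Set.InjOn (c ∘ φ) F

lemma IsRainbowCopy.update [DecidableEq W] {s : V} (h : IsRainbowCopy H G F P cs φ) (hw : w ∉ F)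
    (hs : s ∈ P) (hadj : ∀ q ∈ F, G.Adj s (φ q) ↔ H.Adj w q)
    (hlabel : ∀ c ∈ cs, ∀ q ∈ F, c s ≠ c (φ q)) :
    IsRainbowCopy H G (insert w F) P cs (Function.update φ w s) := by
  have hself : Function.update φ w s w = s := Function.update_self ..
  have hother {x : W} (hx : x ∈ F) : Function.update φ w s x = φ x :=
    Function.update_of_ne (ne_of_mem_of_not_mem hx hw) ..
  refine ⟨?_, ?_, fun c hc => ?_⟩
  · simp only [Finset.forall_mem_insert, hself]
    exact ⟨hs, fun x hx => hother hx ▸ h.mem x hx⟩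
  · simp only [Finset.forall_mem_insert, hself, SimpleGraph.irrefl, true_and]
    refine ⟨fun x hx => hother hx ▸ hadj x hx, fun x hx => ?_⟩
    rw [hother hx, G.adj_comm, H.adj_comm]
    exact ⟨hadj x hx, fun y hy => hother hy ▸ h.adj_iff x hx y hy⟩
  · rw [Finset.coe_insert, Set.injOn_insert (by exact_mod_cast hw)]
    refine ⟨(h.injOn c hc).congr fun x hx => ?_, ?_⟩
    · rw [Function.comp_apply, Function.comp_apply, hother hx]
    · rintro ⟨q, hq, heq⟩
      rw [Function.comp_apply, Function.comp_apply, hself, hother hq] at heq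
      exact hlabel c hc q hq heq.symm

namespace Comb

lemma exists_mem_adj_iff (h : Comb G P cs v S U l) (hφ : IsRainbowCopy H G F U (l :: cs) φ)
    (hleaf : ∀ x ∈ F, ∀ y ∈ F, H.Adj w x → H.Adj w y → x = y) (hF : F.card < S.card) :
    ∃ s ∈ S, ∀ q ∈ F, G.Adj s (φ q) ↔ H.Adj w q := by
  classical
  by_cases hp : ∃ p ∈ F, H.Adj w p
  · obtain ⟨p, hp, hwp⟩ := hp
    have hmem := h.mem _ (hφ.mem p hp)
    refine ⟨l (φ p), hmem, fun q hq => ?_⟩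
    rw [h.adj_iff _ (hφ.mem q hq) _ hmem]
    exact ⟨fun heq => hφ.injOn l List.mem_cons_self hp hq heq ▸ hwp,
      fun hwq => hleaf p hp q hq hwp hwq ▸ rfl⟩
  · push Not at hp
    obtain ⟨s, hs, hfresh⟩ := Finset.exists_mem_notMem_of_card_lt_card
      ((Finset.card_image_le (s := F) (f := fun q => l (φ q))).trans_lt hF)
    refine ⟨s, hs, fun q hq => iff_of_false (fun hadj => hfresh ?_) (hp q hq)⟩
    exact Finset.mem_image.2 ⟨q, hq, ((h.adj_iff _ (hφ.mem q hq) s hs).1 hadj).symm⟩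

end Comb

lemma IteratedComb.exists_isRainbowCopy (hH : H.IsAcyclic) (hF : F.card ≤ N)
    (h : IteratedComb G N F.card P cs) : ∃ φ, IsRainbowCopy H G F P cs φ := by
  classical
  induction hn : F.card generalizing F P cs with
  | zero =>
    obtain ⟨x, -⟩ : P.Nonempty := by rwa [hn] at h
    obtain rfl := Finset.card_eq_zero.1 hn
    exact ⟨fun _ => x, by simp, by simp, by simp⟩
  | succ n ih =>
    obtain ⟨w, hw, hleaf⟩ := exists_mem_forall_adj_eq_of_isAcyclic hH
      (Finset.card_pos.1 (by omega : 0 < F.card))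
    obtain ⟨v, S, U, l, hcomb, hS, hU⟩ : IteratedComb G N (n + 1) P cs := hn ▸ h
    have hcard : (F.erase w).card = n := by rw [Finset.card_erase_of_mem hw, hn, n.add_sub_cancel]
    obtain ⟨φ, hφ⟩ := ih (by omega) (hcard ▸ hU) hcard
    obtain ⟨s, hs, hadj⟩ := hcomb.exists_mem_adj_iff hφ
      (fun x hx y hy => hleaf x (Finset.mem_of_mem_erase hx) y (Finset.mem_of_mem_erase hy))
      (by omega)
    have hφ' : IsRainbowCopy H G (F.erase w) P cs φ :=
      ⟨fun q hq => hcomb.subset_right (hφ.mem q hq), hφ.adj_iff,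
        fun c hc => hφ.injOn c (List.mem_cons_of_mem l hc)⟩
    rw [← Finset.insert_erase hw]
    exact ⟨_, hφ'.update (Finset.notMem_erase w F) (hcomb.subset_left hs) hadj
      fun c hc q hq => hcomb.label_ne c hc s hs _ (hφ.mem q hq)⟩

lemma Comb.nonempty_starExpansion_embedding [Fintype W] (h : Comb G P cs v S U l)
    (hφ : IsRainbowCopy H G Finset.univ U (l :: cs) φ) : Nonempty (starExpansion H ↪g G) := by
  have hU (w : W) : φ w ∈ U := hφ.mem w (Finset.mem_univ w)
  have hinj : Function.Injective fun w => l (φ w) := fun a b hab =>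
    hφ.injOn l List.mem_cons_self (Finset.mem_coe.2 (Finset.mem_univ a))
      (Finset.mem_coe.2 (Finset.mem_univ b)) hab
  have hH (a b : W) : G.Adj (φ a) (φ b) ↔ H.Adj a b := hφ.adj_iff a (by simp) b (by simp)
  have hvS (a : W) : G.Adj v (l (φ a)) := h.adj_center _ (h.mem _ (hU a))
  have hvU (a : W) : ¬ G.Adj v (φ a) := (h.nonadj _ (hU a)).1
  have hSU (a b : W) : G.Adj (l (φ a)) (φ b) ↔ a = b := by
    rw [h.adj_iff _ (hU b) _ (h.mem _ (hU a)), hinj.eq_iff]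
  have hUS' (a b : W) : G.Adj (φ a) (l (φ b)) ↔ a = b := by rw [G.adj_comm, hSU, eq_comm]
  have hSS (a b : W) : ¬ G.Adj (l (φ a)) (l (φ b)) :=
    h.stable _ (h.mem _ (hU a)) _ (h.mem _ (hU b))
  have hUS (a b : W) : φ a ≠ l (φ b) := fun hab => hvU a (hab ▸ hvS b)
  have hUv (a : W) : φ a ≠ v := (h.nonadj _ (hU a)).2.symm
  have hrel (a b : W) : ¬ a = b ∧ (H.Adj a b ∨ H.Adj b a) ↔ H.Adj a b := by
    rw [H.adj_comm b, or_self, and_iff_right_of_imp Adj.ne]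
  refine ⟨⟨⟨Sum.elim φ (Sum.elim (fun a => l (φ a)) fun _ => v), ?_⟩, ?_⟩⟩
  · refine Function.Injective.sumElim (.of_comp hinj) (hinj.sumElim ?_ fun a _ => (hvS a).ne') ?_
    · exact Function.injective_of_subsingleton _
    · rintro a (b | _)
      exacts [hUS a b, hUv a]
  · rintro (_ | _ | _) (_ | _ | _) <;>
      simp [starExpansion, hH, hvS, hvU, hSU, hUS', hSS, hrel, G.adj_comm _ v, eq_comm]

lemma IteratedComb.nonempty_starExpansion_embedding [Fintype W] (hH : H.IsAcyclic)
    (hN : Fintype.card W ≤ N) (h : IteratedComb G N (Fintype.card W + 1) P cs) :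
    Nonempty (starExpansion H ↪g G) := by
  obtain ⟨v, S, U, l, hcomb, -, hU⟩ := h
  rw [← Finset.card_univ] at hN hU
  obtain ⟨φ, hφ⟩ := hU.exists_isRainbowCopy hH hN
  exact hcomb.nonempty_starExpansion_embedding hφ

end ForestEmbedding

section Outcomes

variable {V : Type u} {G : SimpleGraph V} {P Q R S T T' U : Finset V} {cs : List (V → V)}
  {l : V → V} {C κ ρ ρ₁ K η q y σ m m' r w : ℝ} {D D' J N : ℕ} {t : Bool}

lemma gap_le_logCard (T : Finset V) (D : ℕ) : gap T D ≤ logCard T :=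
  sub_le_self _ (Real.log_natCast_nonneg D)

lemma nonempty_and_logCard_le_of_exp_mul_le (hP : P.Nonempty)
    (h : Real.exp (-w) * P.card ≤ Q.card) : Q.Nonempty ∧ logCard P ≤ logCard Q + w := by
  have hPpos : (0 : ℝ) < P.card := by exact_mod_cast hP.card_pos
  have hpos : (0 : ℝ) < Real.exp (-w) * P.card := by positivity
  have hlog := Real.log_le_log hpos h
  rw [Real.log_mul (Real.exp_pos _).ne' hPpos.ne', Real.log_exp] at hlog
  exact ⟨Finset.card_pos.1 (by exact_mod_cast hpos.trans_le h), by simp only [logCard]; linarith⟩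

lemma LabelsSmall.subset (h : LabelsSmall P cs m) (hQ : Q ⊆ P) (hne : Q.Nonempty)
    (hle : logCard P + m' ≤ logCard Q + m) : LabelsSmall Q cs m' := fun c hc x => by
  calc ((labelClass c x Q).card : ℝ) ≤ (labelClass c x P).card := by
        exact_mod_cast Finset.card_le_card (labelClass_mono c x hQ)
    _ ≤ Real.exp (-m) * P.card := h c hc x
    _ ≤ Real.exp (-m') * Q.card := by
        rw [← exp_logCard hne, ← exp_logCard (hne.mono hQ), ← Real.exp_add, ← Real.exp_add]
        exact Real.exp_le_exp.2 (by linarith)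

lemma LabelsSmall.cons (h : LabelsSmall P cs m) (hl : ∀ x, (labelClass l x P).card ≤ D)
    (hD : 1 ≤ D) (hP : P.Nonempty) (hm : m ≤ gap P D) : LabelsSmall P (l :: cs) m := by
  refine List.forall_mem_cons.2 ⟨fun x => ?_, h⟩
  have hDpos : (0 : ℝ) < D := by exact_mod_cast hD
  calc ((labelClass l x P).card : ℝ) ≤ D := by exact_mod_cast hl x
    _ ≤ Real.exp (-m) * P.card := by
        rw [← exp_logCard hP, ← Real.exp_add, ← Real.exp_log hDpos]
        exact Real.exp_le_exp.2 (by simp only [gap] at hm; linarith)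

/-- The quantity maximised over star covers: `|T| * (|T| / D) ^ η`, in logarithms. -/
noncomputable def potential (η : ℝ) (T : Finset V) (D : ℕ) : ℝ := logCard T + η * gap T D

/-- A nonempty set inducing a graph of maximum degree at most `D`. -/
structure IsSparse (G : SimpleGraph V) (R : Finset V) (D : ℕ) : Prop where
  nonempty : R.Nonempty
  degree_le : ∀ x ∈ R, (nbrIn G x R).card ≤ D

/-- A star cover, in the graph or in its complement, of gap at least `a` and of size nearly that of
`P`: at least `exp (-κ * gap)` times it. -/
def HasStarCover (G : SimpleGraph V) (P : Finset V) (cs : List (V → V)) (a κ : ℝ) : Prop :=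
  ∃ t v A T D, StarCover (side G t) P cs v A T D ∧ a ≤ gap T D ∧ logCard P ≤ potential κ T D

/-- A sparse subset, in the graph or in its complement, of gap at least `a` and of size nearly that
of `P`: at least `exp (-κ * gap)` times it. -/
def HasSparseSubset (G : SimpleGraph V) (P : Finset V) (a κ : ℝ) : Prop :=
  ∃ t, ∃ R ⊆ P, ∃ D, IsSparse (side G t) R D ∧ a ≤ gap R D ∧ logCard P ≤ potential κ R D

/-- The sparse critical sets in which a star cover is sought. -/
structure IsSeed (G : SimpleGraph V) (σ y : ℝ) (R : Finset V) (D : ℕ) : Prop where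
  sparse : ∃ t, IsSparse (side G t) R D
  le_gap : 2 * y ≤ gap R D
  critical : Critical G σ (1 + 3 * σ * gap R D) R

/-- The critical star covers over which the potential is maximised. -/
structure IsCandidate (G : SimpleGraph V) (P : Finset V) (cs : List (V → V)) (σ y : ℝ)
    (T : Finset V) (D : ℕ) : Prop where
  cover : ∃ t v A, StarCover (side G t) P cs v A T D
  le_gap : y ≤ gap T D
  critical : Critical G σ (1 + 6 * σ * gap T D) T

/-- The hierarchy of constants in the inductive step. The star cover bound holds with exponent `ρ`
and `μ = η / 16`, the induction hypothesis for the teeth of a comb with `ρ₁` and `K`; sparsity is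
measured by `y`, criticality by `σ`, and a comb with teeth covering less than `exp (-q)` of a star
cover improves the potential. -/
structure Scale (N : ℕ) (C κ ρ ρ₁ K η q y σ : ℝ) : Prop where
  one_le_C : 1 ≤ C
  κ_le_one : κ ≤ 1
  η_pos : 0 < η
  η_le : 4 * η ≤ κ
  C_mul_η_le : 16 * C * η ≤ 1
  q_pos : 0 < q
  exp_q : 2 * Real.exp (-q) = 1 - Real.exp (-(η * Real.log (4 / 3) / 8))
  y_pos : 0 < y
  K_le_y : 2 * C * (K + q) ≤ y
  q_le_y : 4 * C * q ≤ y
  q_le_η_mul_y : 2 * q ≤ η * y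
  N_le : N ≤ 2 * Real.exp (y - q)
  ρ_mul_y : 256 ≤ ρ * η * y
  ρ₁_mul_y : 8 * C ≤ ρ₁ * y
  ρ_lt_one : ρ < 1
  σ_pos : 0 < σ
  σ_le_ρ : 1536 * σ ≤ ρ * η
  σ_le_ρ₁ : 56 * C * σ ≤ ρ₁

/-- The statement proved by induction on `n true + n false`: a large enough set in an `X`-free graph
that is critical up to a small slack and has small label classes contains a comb iterated `n true`
times in the graph or `n false` times in its complement, a star cover, or a sparse subset. -/
def OutcomeBound {W : Type*} (X : SimpleGraph W) (N : ℕ) (n : Bool → ℕ) (J : ℕ)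
    (C κ ρ K : ℝ) : Prop :=
  ∀ (V : Type u) (G : SimpleGraph V) (P : Finset V) (cs : List (V → V)) (m : ℝ),
    ¬ Nonempty (X ↪g G) → cs.length ≤ J → K ≤ m → m ≤ logCard P → LabelsSmall P cs m →
    P.Nonempty → Critical G ρ (ρ * m) P →
    (∃ t, IteratedComb (side G t) N (n t) P cs) ∨ HasStarCover G P cs (C * m) κ ∨
      HasSparseSubset G P (C * m) κ

namespace Scale

lemma ρ_pos (hs : Scale N C κ ρ ρ₁ K η q y σ) : 0 < ρ := by
  by_contra! h
  nlinarith [hs.ρ_mul_y, mul_pos hs.η_pos hs.y_pos]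

lemma η_mul_le (hs : Scale N C κ ρ ρ₁ K η q y σ) {z : ℝ} (hz : 0 ≤ z) : η * z ≤ z / 16 := by
  have hη : η ≤ 1 / 16 := by nlinarith [hs.one_le_C, hs.η_pos, hs.C_mul_η_le]
  linarith [mul_le_mul_of_nonneg_right hη hz]

lemma sub_le_of_mul_sub_le (hs : Scale N C κ ρ ρ₁ K η q y σ) {z a b : ℝ} (hz : 2 * y ≤ z)
    (h : (ρ - σ) * (a - b) ≤ 1 + 3 * σ * z) : a ≤ b + η / 128 * z := by
  have hz0 : 0 ≤ z := by linarith [hs.y_pos]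
  have hρ := hs.ρ_pos
  have hση : σ * z ≤ ρ * η * z / 1536 := by
    linarith [mul_le_mul_of_nonneg_right hs.σ_le_ρ hz0]
  have hσρ : 2 * σ ≤ ρ := by nlinarith [hs.σ_le_ρ, hs.η_mul_le hρ.le]
  have hone : 512 ≤ ρ * η * z := by
    linarith [hs.ρ_mul_y, mul_le_mul_of_nonneg_left hz (mul_pos hρ hs.η_pos).le]
  have hcancel : (ρ - σ) * (a - b) ≤ (ρ - σ) * (η / 128 * z) := by
    nlinarith [mul_nonneg (sub_nonneg.2 hσρ) (mul_nonneg hs.η_pos.le hz0)]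
  linarith [le_of_mul_le_mul_left hcancel (by linarith [hs.σ_pos])]

end Scale

lemma exists_isSeed_of_critical (h : Critical G (σ * κ / 16) (σ * κ / 16 * m) P) (hP : P.Nonempty)
    (hsparse : ∀ Q : Finset V, Q.Nonempty → ∃ t, ∃ R ⊆ Q, R.Nonempty ∧
      Real.exp (-r) * Q.card ≤ R.card ∧ IsSparseTo (side G t) (Real.exp (-(2 * y))) R R)
    (hσ : 0 < σ) (hσr : σ * r ≤ 1) (hκ : 0 < κ) (hκ1 : κ ≤ 1) (hy : 0 < y) (hym : 4 * y ≤ m)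
    (hrm : r ≤ κ * m / 8) (hm : m ≤ logCard P) :
    ∃ R ⊆ P, ∃ D, IsSeed G σ y R D ∧ logCard P ≤ logCard R + κ * m / 4 := by
  obtain ⟨Q, hQP, hQ, hcritical, hle⟩ := h.exists_critical_subset hP σ
  obtain ⟨t, R, hRQ, hR, hcard, hdeg⟩ := hsparse Q hQ
  have hRlog := (nonempty_and_logCard_le_of_exp_mul_le hQ hcard).2
  have hκm : 0 < κ * m := mul_pos hκ (by linarith)
  have hQlog : logCard P ≤ logCard Q + κ * m / 8 := by
    have hnonneg : 0 ≤ logCard P - logCard Q := sub_nonneg.2 (logCard_mono hQP)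
    have hκdiff : κ * (logCard P - logCard Q) ≤ logCard P - logCard Q :=
      mul_le_of_le_one_left hnonneg hκ1
    have hcancel : σ * (logCard P - logCard Q - κ * (logCard P - logCard Q) / 16) ≤
        σ * (κ * m / 16) := by linarith
    linarith [le_of_mul_le_mul_left hcancel hσ]
  have hκm1 : κ * m ≤ m := mul_le_of_le_one_left (by linarith) hκ1
  have hgap : 2 * y ≤ gap R ⌊Real.exp (-(2 * y)) * R.card⌋₊ := by
    obtain hzero | hpos := Nat.eq_zero_or_pos ⌊Real.exp (-(2 * y)) * (R.card : ℝ)⌋₊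
    · rw [gap, hzero, Nat.cast_zero, Real.log_zero]
      linarith
    · have hRpos : (0 : ℝ) < R.card := by exact_mod_cast hR.card_pos
      have hlog := Real.log_le_log (by exact_mod_cast hpos)
        (Nat.floor_le (by positivity : 0 ≤ Real.exp (-(2 * y)) * (R.card : ℝ)))
      rw [Real.log_mul (Real.exp_pos _).ne' hRpos.ne', Real.log_exp] at hlog
      simp only [gap, logCard]
      linarith
  refine ⟨R, hRQ.trans hQP, _, ⟨⟨t, hR, fun x hx => Nat.le_floor (hdeg x hx)⟩, hgap, ?_⟩,
    by linarith⟩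
  refine (hcritical.subset hRQ hR).weaken le_rfl ?_
  have hσΔ : σ * (logCard Q - logCard R) ≤ σ * r := by
    gcongr
    linarith
  have hσgap : 0 < σ * gap R ⌊Real.exp (-(2 * y)) * R.card⌋₊ := mul_pos hσ (by linarith)
  linarith

lemma IsSeed.exists_maxDegree (h : IsSeed G σ y R D) (hs : Scale N C κ ρ ρ₁ K η q y σ) :
    ∃ t, ∃ Q ⊆ R, ∃ v D', IsSparse (side G t) Q D' ∧ (nbrIn (side G t) v Q).card = D' ∧
      1 ≤ D' ∧ Critical G ρ 0 Q ∧ 7 / 8 * gap R D ≤ gap Q D' ∧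
      logCard R ≤ logCard Q + η / 128 * gap R D := by
  obtain ⟨⟨t, hR, hdeg⟩, hgap, hcritical⟩ := h
  obtain ⟨Q, hQR, hQ, hQcritical, hle⟩ := hcritical.exists_critical_subset hR ρ
  have hy := hs.y_pos
  have hlog : logCard R ≤ logCard Q + η / 128 * gap R D := hs.sub_le_of_mul_sub_le hgap hle
  have hη : η * gap R D ≤ gap R D / 16 := hs.η_mul_le (by linarith)
  have hQtwo : 2 ≤ Q.card := by
    by_contra! hlt
    have hzero : logCard Q = 0 := by
      rw [logCard, show Q.card = 1 by have := hQ.card_pos; omega, Nat.cast_one, Real.log_one]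
    linarith [gap_le_logCard R D]
  obtain ⟨a, ha, b, hb, hadj⟩ := (hQcritical.side t).exists_adj hs.ρ_lt_one hQtwo
  obtain ⟨v, hv, hmax⟩ := Finset.exists_max_image Q (fun x => (nbrIn (side G t) x Q).card) hQ
  set D' := (nbrIn (side G t) v Q).card with hD'
  have hone : 1 ≤ D' := (Finset.card_pos.2 ⟨b, mem_nbrIn.2 ⟨hb, hadj⟩⟩).trans_le (hmax a ha)
  have hlogD : Real.log D' ≤ Real.log D := Real.log_le_log (by exact_mod_cast hone)
    (by exact_mod_cast (card_nbrIn_mono _ v hQR).trans (hdeg v (hQR hv)))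
  refine ⟨t, Q, hQR, v, D', ⟨hQ, hmax⟩, hD'.symm, hone, hQcritical, ?_, hlog⟩
  have hpos : 0 < gap R D := by linarith
  simp only [gap] at hlog hη hpos ⊢
  linarith

lemma IsSeed.isCandidate_of_starCover {A : Finset V} {v : V} (h : IsSeed G σ y R D)
    (hs : Scale N C κ ρ ρ₁ K η q y σ) (hRP : R ⊆ P) (hQR : Q ⊆ R)
    (hcover : StarCover (side G t) Q cs v A T D') (hgap : 7 / 8 * gap R D ≤ gap Q D')
    (hQ : logCard R ≤ logCard Q + η / 128 * gap R D)
    (hT : logCard Q ≤ logCard T + η / 16 * gap Q D') :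
    IsCandidate G P cs σ y T D' ∧ logCard R + η * gap R D / 2 ≤ potential η T D' := by
  have hy := hs.y_pos
  have hz := h.le_gap
  have hηz : η * gap R D ≤ gap R D / 16 := hs.η_mul_le (by linarith)
  have hηg : η * gap Q D' ≤ gap Q D' / 16 := hs.η_mul_le (by linarith)
  have hgapT : gap T D' = logCard T - logCard Q + gap Q D' := by
    simp only [gap]
    ring
  have hTR : T ⊆ R := hcover.subset_right.trans hQR
  refine ⟨⟨⟨t, v, A, hcover.mono (hQR.trans hRP) (List.Subset.refl _)⟩, by linarith, ?_⟩, ?_⟩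
  · refine (h.critical.subset hTR hcover.nonempty).weaken le_rfl ?_
    have hle : σ * (3 * gap R D + (logCard R - logCard T)) ≤ σ * (6 * gap T D') := by
      gcongr
      · exact hs.σ_pos.le
      · linarith
    linarith
  · have hη := hs.η_pos
    have hηgap : η * (7 / 8 * gap R D) ≤ η * gap Q D' := by gcongr
    have hηgapT : η * (15 / 16 * gap Q D') ≤ η * gap T D' := by
      gcongr
      linarith
    simp only [potential]
    linarith [mul_pos hη (by linarith : 0 < gap R D)]

lemma IsSeed.hasSparseSubset_of_not_labelsSmall (h : IsSeed G σ y R D)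
    (hs : Scale N C κ ρ ρ₁ K η q y σ) (hRP : R ⊆ P) (hm : 0 ≤ m)
    (hsize : logCard P ≤ potential η R D + κ / 4 * m) (hlabels : LabelsSmall P cs m)
    (hQR : Q ⊆ R) (hQ : IsSparse (side G t) Q D') (hgap : 7 / 8 * gap R D ≤ gap Q D')
    (hle : logCard R ≤ logCard Q + η / 128 * gap R D)
    (hnot : ¬ LabelsSmall Q cs (η / 16 * gap Q D')) : HasSparseSubset G P (C * m) κ := by
  have hy := hs.y_pos
  have hz := h.le_gap
  have hηz : η * gap R D ≤ gap R D / 16 := hs.η_mul_le (by linarith)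
  have hηzpos : 0 < η * gap R D := mul_pos hs.η_pos (by linarith)
  have hηgap : η * (7 / 8 * gap R D) ≤ η * gap Q D' := by
    gcongr
    exact hs.η_pos.le
  have hκm : κ * m ≤ m := mul_le_of_le_one_left hm hs.κ_le_one
  have hm_lt : logCard Q + m < logCard P + η / 16 * gap Q D' := by
    by_contra! hle
    exact hnot (hlabels.subset (hQR.trans hRP) hQ.nonempty hle)
  simp only [potential] at hsize
  have hmη : m ≤ 2 * η * gap Q D' := by linarith
  have hC := hs.one_le_C
  have hCm : C * m ≤ gap Q D' := by
    have hmul := mul_le_mul_of_nonneg_left hmη (by linarith : 0 ≤ C)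
    have hCη := mul_le_mul_of_nonneg_right hs.C_mul_η_le (by linarith : 0 ≤ gap Q D')
    linarith
  have hηκ : 4 * η * gap Q D' ≤ κ * gap Q D' := by
    gcongr
    · linarith
    · exact hs.η_le
  refine ⟨t, Q, hQR.trans hRP, D', hQ, hCm, ?_⟩
  simp only [potential]
  linarith

lemma IsSeed.hasSparseSubset_or_exists_isCandidate (h : IsSeed G σ y R D)
    (hs : Scale N C κ ρ ρ₁ K η q y σ) (hcover : StarCoverBound.{u} J (η / 16) ρ y)
    (hRP : R ⊆ P) (hm : 0 ≤ m) (hsize : logCard P ≤ potential η R D + κ / 4 * m)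
    (hcs : cs.length ≤ J) (hlabels : LabelsSmall P cs m) :
    HasSparseSubset G P (C * m) κ ∨ ∃ T D', IsCandidate G P cs σ y T D' ∧
      logCard R + η * gap R D / 2 ≤ potential η T D' := by
  obtain ⟨t, Q, hQR, v, D', hQ, hv, hone, hcritical, hgap, hle⟩ := h.exists_maxDegree hs
  by_cases hsmall : LabelsSmall Q cs (η / 16 * gap Q D')
  · have hy : y ≤ gap Q D' := by linarith [hs.y_pos, h.le_gap]
    obtain ⟨A, T, hT, hTle⟩ := hcover V (side G t) Q cs D' v (hcritical.side t) hcs hone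
      hQ.degree_le hv hy hsmall
    exact .inr ⟨T, D', h.isCandidate_of_starCover hs hRP hQR hT hgap hle hTle⟩
  · exact .inl (h.hasSparseSubset_of_not_labelsSmall hs hRP hm hsize hlabels hQR hQ hgap hle hsmall)

lemma StarCover.gap_three_mul_div_four {A : Finset V} {v : V}
    (h : StarCover G P cs v A T (3 * D / 4)) (hw : logCard T' ≤ logCard T + w) :
    gap T' D + (Real.log (4 / 3) - w) ≤ gap T (3 * D / 4) := by
  have hpos : 1 ≤ 3 * D / 4 := h.one_le
  have hDpos : (0 : ℝ) < D := by exact_mod_cast (by omega : 0 < D)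
  have hlog : Real.log (3 * D / 4 : ℕ) ≤ Real.log D - Real.log (4 / 3) := by
    rw [← Real.log_div hDpos.ne' (by norm_num)]
    refine Real.log_le_log (by exact_mod_cast hpos) (Nat.cast_div_le.trans (le_of_eq ?_))
    push_cast
    field_simp
  simp only [gap]
  linarith

namespace IsCandidate

lemma exists_potential_lt {A : Finset V} {v : V} (h : IsCandidate G P cs σ y T D)
    (hs : Scale N C κ ρ ρ₁ K η q y σ) (hT' : T' ⊆ T)
    (hcover : StarCover (side G t) P cs v A T' (3 * D / 4))
    (hle : logCard T ≤ logCard T' + η * Real.log (4 / 3) / 8) :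
    IsCandidate G P cs σ y T' (3 * D / 4) ∧ potential η T D < potential η T' (3 * D / 4) := by
  have hlog : 0 < Real.log (4 / 3) := Real.log_pos (by norm_num)
  have hη : η * Real.log (4 / 3) ≤ Real.log (4 / 3) / 16 := hs.η_mul_le hlog.le
  have hηlog : 0 < η * Real.log (4 / 3) := mul_pos hs.η_pos hlog
  have hgap := hcover.gap_three_mul_div_four hle
  refine ⟨⟨⟨t, v, A, hcover⟩, by linarith [h.le_gap], ?_⟩, ?_⟩
  · refine (h.critical.subset hT' hcover.nonempty).weaken le_rfl ?_
    have hσ : σ * (6 * gap T D + (logCard T - logCard T')) ≤ σ * (6 * gap T' (3 * D / 4)) := by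
      gcongr
      · exact hs.σ_pos.le
      · linarith
    linarith
  · have hgain : η * (gap T D + Real.log (4 / 3) / 2) ≤ η * gap T' (3 * D / 4) := by
      gcongr
      · exact hs.η_pos.le
      · linarith
    simp only [potential]
    linarith

lemma exists_potential_lt_or_exists_comb (h : IsCandidate G P cs σ y T D)
    (hs : Scale N C κ ρ ρ₁ K η q y σ) :
    (∃ T' D', IsCandidate G P cs σ y T' D' ∧ potential η T D < potential η T' D') ∨
    ∃ t v S U l, Comb (side G t) P cs v S U l ∧ N ≤ S.card ∧ U ⊆ T ∧ U.Nonempty ∧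
      logCard T ≤ logCard U + q ∧ ∀ x, (labelClass l x U).card ≤ D := by
  obtain ⟨t, v, A, hT⟩ := h.cover
  obtain ⟨S, U, T', l, hUT, hT'T, hcard, hT', hSU, hcomb, hlabel⟩ := hT.exists_comb
  have hcard : (T.card : ℝ) ≤ T'.card + S.card * D := by exact_mod_cast hcard
  have hSU : (S.card : ℝ) * D ≤ 2 * U.card := by exact_mod_cast hSU
  obtain hfew | hmany := le_or_gt ((S.card : ℝ) * D) (2 * Real.exp (-q) * T.card)
  · left
    obtain ⟨hne, hle⟩ := nonempty_and_logCard_le_of_exp_mul_le (Q := T') hT.nonempty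
      (w := η * Real.log (4 / 3) / 8) (by rw [hs.exp_q] at hfew; linarith)
    exact ⟨T', _, h.exists_potential_lt hs hT'T (hT' hne) hle⟩
  · right
    have hDpos : (0 : ℝ) < D := by exact_mod_cast hT.one_le
    obtain ⟨hne, hle⟩ := nonempty_and_logCard_le_of_exp_mul_le (Q := U) (w := q) hT.nonempty
      (by linarith)
    have hexp : Real.exp (y - q) * D ≤ Real.exp (-q) * T.card := by
      rw [← exp_logCard hT.nonempty, ← Real.exp_log hDpos, ← Real.exp_add, ← Real.exp_add]
      have hgap := h.le_gap
      rw [gap] at hgap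
      exact Real.exp_le_exp.2 (by linarith)
    have hN : (N : ℝ) ≤ S.card :=
      hs.N_le.trans (le_of_mul_le_mul_right (by linarith) hDpos)
    exact ⟨t, v, S, U, l, hcomb, by exact_mod_cast hN, hUT, hne, hle, hlabel⟩

lemma exists_forall_potential_le (h : IsCandidate G P cs σ y T D) (hy : 0 < y) (η : ℝ) :
    ∃ T D, IsCandidate G P cs σ y T D ∧
      ∀ T' D', IsCandidate G P cs σ y T' D' → potential η T' D' ≤ potential η T D := by
  have hfinite : {p : Finset V × ℕ | IsCandidate G P cs σ y p.1 p.2}.Finite := by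
    refine (P.powerset ×ˢ Finset.range (P.card + 1)).finite_toSet.subset fun ⟨T, D⟩ hT => ?_
    obtain ⟨⟨t, v, A, hcover⟩, hgap, -⟩ := hT
    have hlog : Real.log D ≤ Real.log T.card := by
      simp only [gap, logCard] at hgap
      linarith
    rw [Real.log_le_log_iff (by exact_mod_cast hcover.one_le)
      (by exact_mod_cast hcover.nonempty.card_pos), Nat.cast_le] at hlog
    simp only [Finset.coe_product, Set.mem_prod, Finset.mem_coe, Finset.mem_powerset,
      Finset.mem_range]
    exact ⟨hcover.subset_right,
      Nat.lt_succ_of_le (hlog.trans (Finset.card_le_card hcover.subset_right))⟩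
  obtain ⟨⟨T', D'⟩, hcandidate, hmax⟩ :=
    Set.exists_max_image _ (fun p => potential η p.1 p.2) hfinite ⟨(T, D), h⟩
  exact ⟨T', D', hcandidate, fun T'' D'' h => hmax (T'', D'') h⟩

lemma hasStarCover (h : IsCandidate G P cs σ y T D) (hs : Scale N C κ ρ ρ₁ K η q y σ)
    (hm : 0 ≤ m) (hsize : logCard P ≤ potential η T D + κ / 4 * m) (hgap : C * m ≤ gap T D) :
    HasStarCover G P cs (C * m) κ := by
  obtain ⟨t, v, A, hcover⟩ := h.cover
  have hκ : 0 ≤ κ := by linarith [hs.η_pos, hs.η_le]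
  have hκm : κ * m ≤ κ * gap T D := by
    gcongr
    exact (le_mul_of_one_le_left hm hs.one_le_C).trans hgap
  have hηκ : 4 * η * gap T D ≤ κ * gap T D :=
    mul_le_mul_of_nonneg_right hs.η_le (hs.y_pos.le.trans h.le_gap)
  refine ⟨t, v, A, T, D, hcover, hgap, hsize.trans ?_⟩
  simp only [potential]
  linarith [mul_nonneg hκ (hs.y_pos.le.trans h.le_gap)]

end IsCandidate

namespace IsCandidate

lemma labelsSmall_cons (h : IsCandidate G P cs σ y T D) (hs : Scale N C κ ρ ρ₁ K η q y σ)
    (hUT : U ⊆ T) (hU : U.Nonempty) (hUq : logCard T ≤ logCard U + q)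
    (hlabels : LabelsSmall P cs m) (hl : ∀ x, (labelClass l x U).card ≤ D) (hm : 0 ≤ m)
    (hsize : logCard P ≤ potential η T D + κ / 4 * m) (hgap : gap T D < C * m)
    (hm' : 2 * C * (m' + q) = gap T D) : LabelsSmall U (l :: cs) m' := by
  obtain ⟨t, v, A, hcover⟩ := h.cover
  have hC := hs.one_le_C
  have hpos : 0 ≤ m' + q := by
    have hgap0 : 0 ≤ 2 * C * (m' + q) := hm' ▸ hs.y_pos.le.trans h.le_gap
    exact nonneg_of_mul_nonneg_right hgap0 (by linarith)
  have hle : m' + q ≤ gap T D := by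
    rw [← hm']
    exact le_mul_of_one_le_left hpos (by linarith)
  have hle_half : 2 * (m' + q) ≤ m :=
    le_of_mul_le_mul_left (by linarith : C * (2 * (m' + q)) ≤ C * m) (by linarith)
  have hη : 8 * (η * gap T D) ≤ m' + q := by
    rw [← hm']
    linarith [mul_le_mul_of_nonneg_right hs.C_mul_η_le hpos]
  have hκm : κ * m ≤ m := mul_le_of_le_one_left hm hs.κ_le_one
  refine (hlabels.subset (hUT.trans hcover.subset_right) hU ?_).cons hl hcover.one_le hU ?_
  · simp only [potential] at hsize
    linarith
  · simp only [gap] at hle ⊢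
    linarith

lemma critical_subset (h : IsCandidate G P cs σ y T D) (hs : Scale N C κ ρ ρ₁ K η q y σ)
    (hUT : U ⊆ T) (hU : U.Nonempty) (hUq : logCard T ≤ logCard U + q)
    (hm' : 2 * C * (m' + q) = gap T D) : Critical G ρ₁ (ρ₁ * m') U := by
  have hC := hs.one_le_C
  have hy := hs.y_pos
  have hgap := h.le_gap
  have hσ := hs.σ_pos
  have hσ_le : σ ≤ ρ₁ := by nlinarith [hs.σ_le_ρ₁]
  refine (h.critical.subset hUT hU).weaken hσ_le ?_
  have hq : q ≤ gap T D := by nlinarith [hs.q_le_y, hs.q_pos]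
  have hσq : σ * (logCard T - logCard U) ≤ σ * gap T D := by
    gcongr
    linarith
  have hslack : 8 * C * (1 + 7 * σ * gap T D) ≤ 8 * C * (ρ₁ * m') := by
    have hone : 8 * C ≤ ρ₁ * gap T D := hs.ρ₁_mul_y.trans (by gcongr; linarith)
    have hσgap := mul_le_mul_of_nonneg_right hs.σ_le_ρ₁ (hy.le.trans hgap)
    have hqgap : ρ₁ * (4 * C * q) ≤ ρ₁ * gap T D :=
      mul_le_mul_of_nonneg_left (hs.q_le_y.trans hgap) (by linarith)
    have hgap' : ρ₁ * (2 * C * (m' + q)) = ρ₁ * gap T D := by rw [hm']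
    linarith
  linarith [le_of_mul_le_mul_left hslack (by linarith)]

lemma critical_and_potential_lt (h : IsCandidate G P cs σ y T D)
    (hs : Scale N C κ ρ ρ₁ K η q y σ) (hUT : U ⊆ T) (hUq : logCard T ≤ logCard U + q)
    (hSU : S ⊆ U) (hS : S.Nonempty) (hgap : 4 * gap T D ≤ gap S D')
    (hsize : logCard U ≤ potential (η / 12) S D') :
    Critical G σ (1 + 3 * σ * gap S D') S ∧
      potential η T D < logCard S + η * gap S D' / 2 := by
  have hη := hs.η_pos
  have hgapT : 0 < gap T D := hs.y_pos.trans_le h.le_gap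
  have hηT : 0 < η * gap T D := mul_pos hη hgapT
  have hηgap : η * (4 * gap T D) ≤ η * gap S D' := by gcongr
  have hηS : η * gap S D' ≤ gap S D' / 16 := hs.η_mul_le (by linarith)
  have hq : 2 * q ≤ η * gap T D := hs.q_le_η_mul_y.trans (by gcongr; exact h.le_gap)
  simp only [potential] at hsize ⊢
  refine ⟨(h.critical.subset (hSU.trans hUT) hS).weaken le_rfl ?_, by linarith⟩
  have hσ : σ * (6 * gap T D + (logCard T - logCard S)) ≤ σ * (3 * gap S D') := by
    gcongr
    · exact hs.σ_pos.le
    · linarith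
  linarith

/-- The outcome on the teeth `U` of a comb has a gap at least four times that of `T`. A star cover
would then have a larger potential, and a sparse subset yields either a candidate of larger
potential or a sparse subset of `P`. -/
lemma hasSparseSubset_of_teeth (h : IsCandidate G P cs σ y T D)
    (hs : Scale N C κ ρ ρ₁ K η q y σ) (hcover : StarCoverBound.{u} J (η / 16) ρ y)
    (hmax : ∀ T' D', IsCandidate G P cs σ y T' D' → potential η T' D' ≤ potential η T D)
    (hcs : cs.length ≤ J) (hlabels : LabelsSmall P cs m) (hm : 0 ≤ m)
    (hsize : logCard P ≤ potential η T D + κ / 4 * m)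
    (hUT : U ⊆ T) (hUq : logCard T ≤ logCard U + q) (hm' : 2 * C * (m' + q) = gap T D)
    (hteeth : HasStarCover G U (l :: cs) (16 * C * m') (η / 12) ∨
      HasSparseSubset G U (16 * C * m') (η / 12)) : HasSparseSubset G P (C * m) κ := by
  obtain ⟨_, _, _, hT⟩ := h.cover
  have hUP : U ⊆ P := hUT.trans hT.subset_right
  have hgapT := h.le_gap
  have hy := hs.y_pos
  have hη := hs.η_pos
  have hm'_ge : 4 * gap T D ≤ 16 * C * m' := by linarith [hs.q_le_y]
  obtain ⟨t, v, A, S, D', hS, hgap, hle⟩ | ⟨t, S, hSU, D', hS, hgap, hle⟩ := hteeth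
  · obtain ⟨hcritical, hlt⟩ := h.critical_and_potential_lt hs hUT hUq hS.subset_right hS.nonempty
      (hm'_ge.trans hgap) hle
    have hσgap : 0 < σ * gap S D' := mul_pos hs.σ_pos (by linarith)
    have hηgap : 0 < η * gap S D' := mul_pos hη (by linarith)
    have hbetter := hmax S D' ⟨⟨t, v, A, hS.mono hUP (List.subset_cons_self _ _)⟩, by linarith,
      hcritical.weaken le_rfl (by linarith)⟩
    simp only [potential] at hlt hbetter
    linarith
  · obtain ⟨hcritical, hlt⟩ := h.critical_and_potential_lt hs hUT hUq hSU hS.nonempty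
      (hm'_ge.trans hgap) hle
    have hseed : IsSeed G σ y S D' := ⟨⟨t, hS⟩, by linarith, hcritical⟩
    have hηgap : 0 < η * gap S D' := mul_pos hη (by linarith)
    obtain hsparse | ⟨T', D'', hcandidate, hpotential⟩ :=
      hseed.hasSparseSubset_or_exists_isCandidate hs hcover (hSU.trans hUP) hm
        (by simp only [potential] at hsize hlt ⊢; linarith) hcs hlabels
    · exact hsparse
    · linarith [hmax _ _ hcandidate]

end IsCandidate

/-- The induction hypothesis for the teeth of a comb in a star cover of `P`: they carry iterated
combs which the comb turns into iterated combs on `P`, a star cover, or a sparse subset. -/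
def TeethBound (G : SimpleGraph V) (P : Finset V) (cs : List (V → V)) (N : ℕ) (n : Bool → ℕ)
    (C κ ρ K : ℝ) : Prop :=
  ∀ t v S U l m, Comb (side G t) P cs v S U l → N ≤ S.card → K ≤ m → m ≤ logCard U →
    LabelsSmall U (l :: cs) m → U.Nonempty → Critical G ρ (ρ * m) U →
    (∃ t, IteratedComb (side G t) N (n t) P cs) ∨ HasStarCover G U (l :: cs) (C * m) κ ∨
      HasSparseSubset G U (C * m) κ

lemma IsCandidate.outcome {n : Bool → ℕ} (h : IsCandidate G P cs σ y T D)
    (hs : Scale N C κ ρ ρ₁ K η q y σ) (hcover : StarCoverBound.{u} J (η / 16) ρ y)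
    (hteeth : TeethBound G P cs N n (16 * C) (η / 12) ρ₁ K)
    (hcs : cs.length ≤ J) (hlabels : LabelsSmall P cs m) (hm : 0 ≤ m)
    (hsize : logCard P ≤ potential η T D + κ / 4 * m) :
    (∃ t, IteratedComb (side G t) N (n t) P cs) ∨ HasStarCover G P cs (C * m) κ ∨
      HasSparseSubset G P (C * m) κ := by
  obtain ⟨T', D', hT', hmax⟩ := h.exists_forall_potential_le hs.y_pos η
  have hsize' : logCard P ≤ potential η T' D' + κ / 4 * m := by linarith [hmax T D h]
  obtain hgap | hgap := le_or_gt (C * m) (gap T' D')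
  · exact .inr (.inl (hT'.hasStarCover hs hm hsize' hgap))
  obtain ⟨T'', D'', hT'', hlt⟩ | ⟨t, v, S, U, l, hcomb, hN, hUT, hU, hUq, hl⟩ :=
    hT'.exists_potential_lt_or_exists_comb hs
  · exact absurd (hmax _ _ hT'') hlt.not_ge
  have hC := hs.one_le_C
  have hgap_ge := hT'.le_gap
  obtain ⟨m', hm'⟩ : ∃ m', 2 * C * (m' + q) = gap T' D' :=
    ⟨gap T' D' / (2 * C) - q, by field_simp; ring⟩
  have hK : K ≤ m' := by
    have hle : 2 * C * (K + q) ≤ 2 * C * (m' + q) := by linarith [hs.K_le_y]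
    linarith [le_of_mul_le_mul_left hle (by linarith)]
  have hm'U : m' ≤ logCard U := by
    have hpos : 0 ≤ m' + q := nonneg_of_mul_nonneg_right (a := 2 * C)
      (by linarith [hs.y_pos]) (by linarith)
    have hle : m' + q ≤ gap T' D' := hm' ▸ le_mul_of_one_le_left hpos (by linarith)
    linarith [gap_le_logCard T' D']
  obtain hcombs | hout := hteeth t v S U l m' hcomb hN hK hm'U
    (hT'.labelsSmall_cons hs hUT hU hUq hlabels hl hm hsize' hgap hm') hU
    (hT'.critical_subset hs hUT hU hUq hm')
  · exact .inl hcombs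
  · exact .inr (.inr (hT'.hasSparseSubset_of_teeth hs hcover hmax hcs hlabels hm hsize' hUT hUq
      hm' hout))

lemma IsSeed.outcome {n : Bool → ℕ} (h : IsSeed G σ y R D) (hs : Scale N C κ ρ ρ₁ K η q y σ)
    (hcover : StarCoverBound.{u} J (η / 16) ρ y)
    (hteeth : TeethBound G P cs N n (16 * C) (η / 12) ρ₁ K)
    (hcs : cs.length ≤ J) (hlabels : LabelsSmall P cs m) (hm : 0 ≤ m) (hRP : R ⊆ P)
    (hsize : logCard P ≤ logCard R + κ * m / 4) :
    (∃ t, IteratedComb (side G t) N (n t) P cs) ∨ HasStarCover G P cs (C * m) κ ∨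
      HasSparseSubset G P (C * m) κ := by
  have hηgap : 0 < η * gap R D := mul_pos hs.η_pos (by linarith [hs.y_pos, h.le_gap])
  obtain hsparse | ⟨T, D', hT, hpotential⟩ :=
    h.hasSparseSubset_or_exists_isCandidate hs hcover hRP hm
      (by simp only [potential]; linarith) hcs hlabels
  · exact .inr (.inr hsparse)
  · exact hT.outcome hs hcover hteeth hcs hlabels hm (by linarith)

end Outcomes

section OutcomeBounds

variable {W : Type*} {X : SimpleGraph W} {C κ ρ ρ' K K' ρ₁ r w : ℝ} {J N : ℕ} {n : Bool → ℕ}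

lemma exists_two_mul_exp_neg_eq (hw : 0 < w) :
    ∃ q, 0 < q ∧ 2 * Real.exp (-q) = 1 - Real.exp (-w) := by
  have hlt : Real.exp (-w) < 1 := by simpa using hw
  have hpos : 0 < (1 - Real.exp (-w)) / 2 := by linarith
  refine ⟨-Real.log ((1 - Real.exp (-w)) / 2), ?_, ?_⟩
  · linarith [Real.log_neg hpos (by linarith [Real.exp_pos (-w)])]
  · rw [neg_neg, Real.exp_log hpos]
    ring

lemma exists_scale (N : ℕ) (hC : 1 ≤ C) (hκ : 0 < κ) (hκ1 : κ ≤ 1) (hρ : 0 < ρ) (hρ1 : ρ < 1)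
    (hρ₁ : 0 < ρ₁) (K y₀ : ℝ) :
    ∃ q y, y₀ ≤ y ∧ ∀ r > 0, ∃ σ, Scale N C κ ρ ρ₁ K (κ / (16 * C)) q y σ ∧ σ * r ≤ 1 := by
  set η := κ / (16 * C) with hη
  have hηpos : 0 < η := by positivity
  have hηC : 16 * C * η = κ := by
    rw [hη]
    field_simp
  obtain ⟨q, hq, hexp⟩ := exists_two_mul_exp_neg_eq (w := η * Real.log (4 / 3) / 8)
    (by have := Real.log_pos (by norm_num : (1 : ℝ) < 4 / 3); positivity)
  have hlarge (a b : ℝ) (hb : 0 < b) : ∀ᶠ y in Filter.atTop, a ≤ b * y :=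
    (Filter.tendsto_id.const_mul_atTop hb).eventually_ge_atTop a
  obtain ⟨y, hy, hy₀, hKy, hqy, hNy, hηy, hρy, hρ₁y⟩ :=
    ((Filter.eventually_gt_atTop (0 : ℝ)).and <| (Filter.eventually_ge_atTop y₀).and <|
      (Filter.eventually_ge_atTop (2 * C * (K + q))).and <|
      (Filter.eventually_ge_atTop (4 * C * q)).and <|
      (Filter.eventually_ge_atTop (q + N)).and <| (hlarge (2 * q) η hηpos).and <|
      (hlarge 256 (ρ * η) (by positivity)).and (hlarge (8 * C) ρ₁ hρ₁)).exists
  refine ⟨q, y, hy₀, fun r hr => ?_⟩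
  obtain ⟨σ, hσ, hσ_le⟩ :=
    exists_between (show 0 < min (ρ * η / 1536) (min (ρ₁ / (56 * C)) (1 / r)) by positivity)
  rw [lt_min_iff, lt_min_iff, lt_div_iff₀ (by positivity), lt_div_iff₀ (by positivity),
    lt_div_iff₀ hr] at hσ_le
  have hN : (N : ℝ) ≤ 2 * Real.exp (y - q) := by
    linarith [Real.add_one_le_exp (y - q), Real.exp_pos (y - q)]
  exact ⟨σ,
    { one_le_C := hC
      κ_le_one := hκ1
      η_pos := hηpos
      η_le := by nlinarith
      C_mul_η_le := by linarith
      q_pos := hq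
      exp_q := hexp
      y_pos := hy
      K_le_y := hKy
      q_le_y := hqy
      q_le_η_mul_y := hηy
      N_le := hN
      ρ_mul_y := hρy
      ρ₁_mul_y := hρ₁y
      ρ_lt_one := hρ1
      σ_pos := hσ
      σ_le_ρ := by linarith
      σ_le_ρ₁ := by linarith }, hσ_le.2.2.le⟩

lemma OutcomeBound.anti (h : OutcomeBound.{u} X N n J C κ ρ K) (hρ : ρ' ≤ ρ) (hK : K ≤ K')
    (hK' : 0 ≤ K') : OutcomeBound.{u} X N n J C κ ρ' K' :=
  fun V G P cs m hX hcs hm hmP hlabels hP hcritical =>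
    h V G P cs m hX hcs (hK.trans hm) hmP hlabels hP
      (hcritical.weaken hρ (mul_le_mul_of_nonneg_right hρ (hK'.trans hm)))

lemma exists_forall_outcomeBound {n : Bool → Bool → ℕ}
    (h : ∀ t, ∃ ρ K, 0 < ρ ∧ OutcomeBound.{u} X N (n t) J C κ ρ K) :
    ∃ ρ K, 0 < ρ ∧ ∀ t, OutcomeBound.{u} X N (n t) J C κ ρ K := by
  choose ρ K hρ hbound using h
  refine ⟨min (ρ true) (ρ false), max 0 (max (K true) (K false)), lt_min (hρ _) (hρ _), ?_⟩
  rintro (_ | _)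
  · exact (hbound false).anti (min_le_right _ _)
      ((le_max_right _ _).trans (le_max_right _ _)) (le_max_left _ _)
  · exact (hbound true).anti (min_le_left _ _)
      ((le_max_left _ _).trans (le_max_right _ _)) (le_max_left _ _)

lemma IteratedComb.of_update {V : Type u} {G : SimpleGraph V} {P S U : Finset V}
    {cs : List (V → V)} {v : V} {l : V → V} {t t' : Bool}
    (hcomb : Comb (side G t) P cs v S U l) (hN : N ≤ S.card) (hn : n t ≠ 0)
    (h : IteratedComb (side G t') N (Function.update n t (n t - 1) t') U (l :: cs)) :
    IteratedComb (side G t') N (n t') P cs := by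
  obtain rfl | htt := eq_or_ne t' t
  · rw [Function.update_self] at h
    rw [← Nat.succ_pred_eq_of_ne_zero hn]
    exact ⟨v, S, U, l, hcomb, hN, h⟩
  · rw [Function.update_of_ne htt] at h
    exact h.mono hcomb.subset_right (List.subset_cons_self _ _)

lemma OutcomeBound.teethBound {V : Type u} {G : SimpleGraph V} {P : Finset V} {cs : List (V → V)}
    (h : ∀ t, OutcomeBound.{u} X N (Function.update n t (n t - 1)) (J + 1) C κ ρ K)
    (hn : ∀ t, n t ≠ 0) (hX : ¬ Nonempty (X ↪g G)) (hcs : cs.length ≤ J) :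
    TeethBound G P cs N n C κ ρ K := by
  intro t v S U l m hcomb hN hKm hm hlabels hU hcritical
  exact (h t V G U (l :: cs) m hX (by simpa using hcs) hKm hm hlabels hU hcritical).imp_left
    fun ⟨t', ht'⟩ => ⟨t', ht'.of_update hcomb hN (hn t)⟩

lemma exists_outcomeBound_of_update [Finite W] (hC : 1 ≤ C) (hκ : 0 < κ) (hκ1 : κ ≤ 1)
    (hn : ∀ t, n t ≠ 0)
    (ih : ∀ t, ∃ ρ K, 0 < ρ ∧ OutcomeBound.{u} X N (Function.update n t (n t - 1)) (J + 1)
      (16 * C) (κ / (16 * C) / 12) ρ K) :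
    ∃ ρ K, 0 < ρ ∧ OutcomeBound.{u} X N n J C κ ρ K := by
  obtain ⟨ρ₁, K, hρ₁, hteeth⟩ := exists_forall_outcomeBound ih
  have hη1 : κ / (16 * C) ≤ 1 := by
    rw [div_le_one (by positivity)]
    linarith
  obtain ⟨ρ, y₀, hρ, hρ1, hcover⟩ := exists_starCoverBound.{u} J
    (μ := κ / (16 * C) / 16) (by positivity) (by linarith)
  obtain ⟨q, y, hy₀, hscale⟩ := exists_scale N hC hκ hκ1 hρ hρ1 hρ₁ K y₀
  obtain ⟨δ, hδ, hsparse⟩ := exists_isSparseTo_self.{u} X (Real.exp_pos (-(2 * y)))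
  obtain ⟨σ, hs, hσr⟩ := hscale (max 1 (-Real.log δ)) (lt_max_of_lt_left one_pos)
  have hrδ : Real.exp (-max 1 (-Real.log δ)) ≤ δ := by
    rw [← Real.le_log_iff_exp_le hδ]
    linarith [le_max_right 1 (-Real.log δ)]
  set r := max 1 (-Real.log δ)
  have hy := hs.y_pos
  refine ⟨σ * κ / 16, 8 * r / κ + 4 * y, by have := hs.σ_pos; positivity, ?_⟩
  intro V G P cs m hX hcs hm hmP hlabels hP hcritical
  have hrκ : 0 < 8 * r / κ := by positivity
  have hrm : r ≤ κ * m / 8 := by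
    have hle : 8 * r / κ ≤ m := by linarith
    rw [div_le_iff₀ hκ] at hle
    linarith
  obtain ⟨R, hRP, D, hR, hPR⟩ := exists_isSeed_of_critical hcritical hP
    (fun Q hQ => by
      obtain ⟨t, R, hRQ, hR, hcard, hdeg⟩ := hsparse V G hX Q hQ
      exact ⟨t, R, hRQ, hR, (mul_le_mul_of_nonneg_right hrδ (Nat.cast_nonneg _)).trans hcard, hdeg⟩)
    hs.σ_pos hσr hκ hκ1 hy (by linarith) hrm hmP
  exact hR.outcome hs (hcover.anti hy₀) (OutcomeBound.teethBound hteeth hn hX hcs) hcs hlabels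
    (by linarith) hRP hPR

theorem exists_outcomeBound [Finite W] (X : SimpleGraph W) (N J : ℕ) (n : Bool → ℕ) (hC : 1 ≤ C)
    (hκ : 0 < κ) (hκ1 : κ ≤ 1) : ∃ ρ K, 0 < ρ ∧ OutcomeBound.{u} X N n J C κ ρ K := by
  obtain ⟨s, hs⟩ : ∃ s, s = n true + n false := ⟨_, rfl⟩
  induction s using Nat.strong_induction_on generalizing n J C κ with
  | _ s ih =>
    by_cases hzero : ∃ t, n t = 0
    · obtain ⟨t, ht⟩ := hzero
      refine ⟨1, 0, one_pos, fun V G P cs m _ _ _ _ _ hP _ => .inl ⟨t, ?_⟩⟩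
      rwa [ht]
    · push Not at hzero
      have htrue := hzero true
      have hfalse := hzero false
      refine exists_outcomeBound_of_update hC hκ hκ1 hzero fun t => ?_
      refine ih _ ?_ (J + 1) (Function.update n t (n t - 1)) (by linarith) (by positivity) ?_ rfl
      · cases t <;> simp [hs] <;> omega
      · rw [div_div, div_le_one (by positivity)]
        linarith

end OutcomeBounds

section ErdosHajnal

variable {W : Type*} {H : SimpleGraph W} {W' : Type*} {J : SimpleGraph W'} {V : Type u}
  {G : SimpleGraph V} {P : Finset V} {cs : List (V → V)} {a κ τ K : ℝ}

lemma HasStarCover.le_logCard (h : HasStarCover G P cs a κ) : a ≤ logCard P := by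
  obtain ⟨t, v, A, T, D, hT, ha, -⟩ := h
  exact ha.trans ((gap_le_logCard T D).trans (logCard_mono hT.subset_right))

lemma HasSparseSubset.le_logCard (h : HasSparseSubset G P a κ) : a ≤ logCard P := by
  obtain ⟨t, R, hR, D, -, ha, -⟩ := h
  exact ha.trans ((gap_le_logCard R D).trans (logCard_mono hR))

lemma nonempty_compl_embedding_iff : Nonempty (Hᶜ ↪g G) ↔ Nonempty (H ↪g Gᶜ) := by
  rw [Embedding.complEquiv.nonempty_congr, compl_compl]

/-- The combs of the outcomes contain the excluded trees; the other outcomes have gap at least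
`2 * log |P|`, while no gap in `P` exceeds `log |P|`. -/
lemma exists_forall_critical_logCard_lt [Finite W] [Finite W'] (hH : H.IsAcyclic)
    (hJ : J.IsAcyclic) :
    ∃ ρ K : ℝ, 0 < ρ ∧ ∀ (V : Type u) (G : SimpleGraph V) (P : Finset V),
      ¬ Nonempty (starExpansion H ↪g G) → ¬ Nonempty ((starExpansion J)ᶜ ↪g G) → P.Nonempty →
      Critical G ρ (ρ * logCard P) P → logCard P < max K 1 := by
  have := Fintype.ofFinite W
  have := Fintype.ofFinite W'
  obtain ⟨ρ, K, hρ, h⟩ := exists_outcomeBound.{u} (starExpansion H)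
    (max (Fintype.card W) (Fintype.card W')) 0
    (fun t => cond t (Fintype.card W + 1) (Fintype.card W' + 1))
    (one_le_two : (1 : ℝ) ≤ 2) one_pos le_rfl
  refine ⟨ρ, K, hρ, fun V G P hHG hJG hP hcritical => ?_⟩
  by_contra! hlarge
  obtain ⟨hK, hone⟩ := max_le_iff.1 hlarge
  obtain ⟨_ | _, hcomb⟩ | hcover | hsparse :=
    h V G P [] (logCard P) hHG le_rfl hK le_rfl (by simp [LabelsSmall]) hP hcritical
  · exact hJG (nonempty_compl_embedding_iff.2
      (hcomb.nonempty_starExpansion_embedding hJ (le_max_right _ _)))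
  · exact hHG (hcomb.nonempty_starExpansion_embedding hH (le_max_left _ _))
  · linarith [hcover.le_logCard]
  · linarith [hsparse.le_logCard]

lemma Critical.log_two_le (h : Critical G τ 0 P) (hP : 2 ≤ P.card) :
    Real.log 2 ≤ τ * logCard P := by
  obtain ⟨x, hx⟩ : P.Nonempty := Finset.card_pos.1 (by omega)
  have hsingleton := h {x} (by simpa) (Finset.singleton_nonempty x)
  have htwo : Real.log 2 ≤ logKappa G P :=
    Real.log_le_log two_pos (by exact_mod_cast two_le_kappaOn G hP)
  simp only [logCard, logKappa, kappaOn_singleton, Finset.card_singleton, Nat.cast_one,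
    Real.log_one] at hsingleton htwo ⊢
  linarith

lemma exists_forall_critical_card_le_one [Finite W] [Finite W'] (hH : H.IsAcyclic)
    (hJ : J.IsAcyclic) :
    ∃ τ : ℝ, 0 < τ ∧ ∀ (V : Type u) (G : SimpleGraph V) (P : Finset V),
      ¬ Nonempty (starExpansion H ↪g G) → ¬ Nonempty ((starExpansion J)ᶜ ↪g G) →
      Critical G τ 0 P → P.card ≤ 1 := by
  obtain ⟨ρ, K, hρ, hsmall⟩ := exists_forall_critical_logCard_lt.{u} hH hJ
  have hK : 0 < max K 1 := lt_max_of_lt_right one_pos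
  have hlog : 0 < Real.log 2 := Real.log_pos one_lt_two
  refine ⟨min ρ (Real.log 2 / max K 1), by positivity, fun V G P hHG hJG hcritical => ?_⟩
  by_contra! hP
  have hlt := hsmall V G P hHG hJG (Finset.card_pos.1 (by omega))
    (hcritical.weaken (min_le_left _ _) (mul_nonneg hρ.le (logCard_nonneg P)))
  have hle : Real.log 2 ≤ Real.log 2 / max K 1 * logCard P :=
    (hcritical.log_two_le hP).trans
      (mul_le_mul_of_nonneg_right (min_le_right _ _) (logCard_nonneg P))
  rw [div_mul_eq_mul_div, le_div_iff₀ hK, mul_le_mul_iff_right₀ hlog] at hle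
  linarith

lemma rpow_le_kappaOn_of_critical_card_le_one (h : ∀ Q ⊆ P, Critical G τ 0 Q → Q.card ≤ 1)
    (hP : P.Nonempty) : (P.card : ℝ) ^ τ ≤ kappaOn G P := by
  obtain ⟨Q, hQP, hQ, hcritical, hle⟩ := exists_critical_subset G τ hP
  have hcard : Q.card = 1 := le_antisymm (h Q hQP hcritical) hQ.card_pos
  have hlogQ : logCard Q = 0 := by simp [logCard, hcard]
  have hlogκ := logKappa_nonneg G Q
  have hPpos : (0 : ℝ) < P.card := by exact_mod_cast hP.card_pos
  have hκpos : (0 : ℝ) < kappaOn G P := by exact_mod_cast one_le_kappaOn G hP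
  rw [← Real.log_le_log_iff (by positivity) hκpos, Real.log_rpow hPpos]
  simp only [logKappa, hlogQ, sub_zero] at hle hlogκ
  rw [logCard] at hle
  linarith

/-- The inclusion of `H` in its star-expansion. -/
def starExpansionEmbedding (H : SimpleGraph W) : H ↪g starExpansion H where
  toEmbedding := .inl
  map_rel_iff' {a b} := by
    simp only [starExpansion, fromRel_adj, Function.Embedding.inl_apply, ne_eq, Sum.inl.injEq,
      H.adj_comm b a, or_self]
    exact ⟨And.right, fun h => ⟨h.ne, h⟩⟩

end ErdosHajnal

theorem stmt_17_general {W : Type*} [Finite W] (H : SimpleGraph W) (hH : H.IsAcyclic)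
    {W' : Type*} [Finite W'] (J : SimpleGraph W') (hJ : J.IsAcyclic) :
    ∃ τ : ℝ, 0 < τ ∧
      ∀ (V : Type u) [Fintype V] (G : SimpleGraph V),
        ¬ Nonempty (starExpansion H ↪g G) →
        ¬ Nonempty ((starExpansion J)ᶜ ↪g G) →
        (Fintype.card V : ℝ) ^ τ ≤ ((max (alphaNum G) (omegaNum G) : ℕ) : ℝ) := by
  obtain ⟨τ, hτ, hcard⟩ := exists_forall_critical_card_le_one.{u} hH hJ
  refine ⟨τ / 2, by positivity, fun V _ G hHG hJG => ?_⟩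
  obtain hV | hV := isEmpty_or_nonempty V
  · rw [Fintype.card_eq_zero, Nat.cast_zero, Real.zero_rpow (by positivity)]
    positivity
  have hrpow := rpow_le_kappaOn_of_critical_card_le_one
    (fun Q _ => hcard V G Q hHG hJG) Finset.univ_nonempty
  rw [Finset.card_univ] at hrpow
  have hsq : ((Fintype.card V : ℝ) ^ (τ / 2)) ^ 2 ≤ (max (alphaNum G) (omegaNum G) : ℕ) ^ 2 := by
    rw [← Real.rpow_mul_natCast (Nat.cast_nonneg _), Nat.cast_two, div_mul_cancel₀ _ two_ne_zero]
    exact hrpow.trans (by exact_mod_cast kappaOn_univ_le G)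
  exact le_of_sq_le_sq hsq (Nat.cast_nonneg _)

/-- For a forest `H` with star-expansion `H'`, the set `{H̄, H'}` has the Erdős–Hajnal
property. -/
theorem stmt_17 {W : Type*} [Fintype W] (H : SimpleGraph W) (hH : H.IsAcyclic) :
    ∃ τ : ℝ, 0 < τ ∧
      ∀ (V : Type) [Fintype V] (G : SimpleGraph V),
        ¬ Nonempty (Hᶜ ↪g G) →
        ¬ Nonempty (starExpansion H ↪g G) →
        (Fintype.card V : ℝ) ^ τ ≤ ((max (alphaNum G) (omegaNum G) : ℕ) : ℝ) := by
  obtain ⟨τ, hτ, h⟩ := stmt_17_general H hH H hH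
  exact ⟨τ, hτ, fun V _ G hcompl hstar => h V G hstar fun ⟨φ⟩ =>
    hcompl ⟨φ.comp (Embedding.complEquiv (starExpansionEmbedding H))⟩⟩
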